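/- arXiv:2208.00917 — 3 statements merged into one kernel-verified Lean document; each statement's English description precedes it below -/
import Mathlib

section
/- Let n be a positive odd integer. Then Z_{n,t}(π/2) = 0 for every t ≥ 0, and there exist continuous functions x_1, …, x_{(n−1)/2} : [0,∞) → ℝ with x_k(0) = π/2 for each k, such that for every t > 0 one has 0 < x_1(t) < … < x_{(n−1)/2}(t) < π/2 and {x ∈ (0,π/2) : Z_{n,t}(x) = 0} = {x_1(t), …, x_{(n−1)/2}(t)}; moreover, each x_k is strictly decreasing on [0,∞), and lim_{t→∞} x_k(t) = (2k−1)π/(2n). -/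
open scoped Real

noncomputable def spin (b : Bool) : ℝ := if b then 1 else -1

/-- The Curie-Weiss partition function `Z_{n,t}(x)`. -/
noncomputable def CWZ (n : ℕ) (t x : ℂ) : ℂ :=
  ∑ σ : Fin n → Bool, Complex.exp
    (t * ((∑ j, spin (σ j) : ℝ) : ℂ) ^ 2
      + Complex.I * x * ((∑ j, spin (σ j) : ℝ) : ℂ))

/-!
The recursion `Z_{n+1,t}(x) = eᵗ (e^{ix} Z_{n,t}(x - 2it) + e^{-ix} Z_{n,t}(x + 2it))` exhibits
`Z_{n+1,t}` on the real line as a multiple of the real part of `e^{ix} Z_{n,t}(x - 2it)`. If the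
zeros of `Z_{n,t}` are real, those of this function lie strictly on one side of the real line, so
its argument winds often enough to produce `n + 1` zeros of the real part in `(0, π)`: by induction
`Z_{n,t}` has `n` distinct zeros there for `t > 0`. As `Z_{n,t}` is a polynomial in `cos x`, these
are all of them, and in increasing order they vary continuously with the coefficients; at `t = 0`
they merge at `π / 2`, and after division by `exp (t n²)` they tend to the zeros of `cos (n x)`.

For fixed `x`, on the other hand, `t ↦ Z_{n,t}(x)` is an exponential sum whose coefficients change
sign at most as often as `cos` does on `[0, n x]`, so Descartes' rule of signs bounds its number of
zeros. The curves which must cross the height `x` on their way from `π / 2` to their limits already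
account for all of them. Hence each curve in `(0, π / 2)` is injective, so strictly decreasing.
-/

open Polynomial Filter Topology ComplexConjugate

/-! ### The partition function at real arguments -/

lemma sum_spin_eq_two_mul_card_sub {n : ℕ} (σ : Fin n → Bool) :
    ∑ j, spin (σ j) = 2 * (Finset.univ.filter fun j => σ j).card - n := by
  have hcard := Finset.card_filter_add_card_filter_not (s := Finset.univ) fun j => σ j = true
  rw [Finset.card_univ, Fintype.card_fin] at hcard
  simp only [spin, Finset.sum_ite, Finset.sum_const, nsmul_eq_mul, mul_one, ← hcard]
  push_cast
  ring

lemma sum_comp_sum_spin {M : Type*} [AddCommMonoid M] (n : ℕ) (g : ℝ → M) :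
    ∑ σ : Fin n → Bool, g (∑ j, spin (σ j))
      = ∑ k ∈ Finset.range (n + 1), n.choose k • g (2 * k - n) := by
  have h := Finset.sum_powerset_apply_card (fun k : ℕ => g (2 * k - n))
    (x := (Finset.univ : Finset (Fin n)))
  rw [Finset.card_univ, Fintype.card_fin] at h
  rw [← h]
  refine Finset.sum_bij' (fun σ _ => Finset.univ.filter fun j => σ j) (fun s _ j => decide (j ∈ s))
    ?_ ?_ ?_ ?_ ?_
  · simp
  · simp
  · simp
  · simp
  · simp [sum_spin_eq_two_mul_card_sub]

lemma CWZ_eq_sum_exp (n : ℕ) (t x : ℂ) :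
    CWZ n t x = ∑ k ∈ Finset.range (n + 1), (n.choose k : ℂ) *
      Complex.exp (t * (2 * k - n) ^ 2 + Complex.I * x * (2 * k - n)) := by
  rw [CWZ, sum_comp_sum_spin n fun S : ℝ => Complex.exp (t * (S : ℂ) ^ 2 + Complex.I * x * S)]
  simp

lemma CWZ_neg (n : ℕ) (t x : ℂ) : CWZ n t (-x) = CWZ n t x := by
  have hspin (b : Bool) : spin (!b) = -spin b := by cases b <;> simp [spin]
  rw [CWZ, ← Equiv.sum_comp (Equiv.arrowCongr (Equiv.refl (Fin n)) Equiv.boolNot)]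
  simp [CWZ, hspin]

lemma CWZ_eq_sum_cos (n : ℕ) (t x : ℂ) :
    CWZ n t x = ∑ k ∈ Finset.range (n + 1), (n.choose k : ℂ) *
      (Complex.exp (t * (2 * k - n) ^ 2) * Complex.cos ((2 * k - n) * x)) := by
  have h : 2 * CWZ n t x = CWZ n t x + CWZ n t (-x) := by rw [CWZ_neg, two_mul]
  refine mul_left_cancel₀ two_ne_zero (h.trans ?_)
  rw [CWZ_eq_sum_exp, CWZ_eq_sum_exp, ← Finset.sum_add_distrib, Finset.mul_sum]
  refine Finset.sum_congr rfl fun k _ => ?_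
  rw [Complex.exp_add, Complex.exp_add, Complex.cos]
  ring_nf

lemma CWZ_succ (n : ℕ) (t x : ℂ) :
    CWZ (n + 1) t x = Complex.exp t *
      (Complex.exp (Complex.I * x) * CWZ n t (x - 2 * Complex.I * t)
        + Complex.exp (-(Complex.I * x)) * CWZ n t (x + 2 * Complex.I * t)) := by
  rw [CWZ, ← Equiv.sum_comp (Fin.consEquiv fun _ : Fin (n + 1) => Bool), Fintype.sum_prod_type]
  simp only [Fin.consEquiv_apply, Fin.sum_univ_succ, Fin.cons_zero, Fin.cons_succ,
    Fintype.sum_bool, CWZ, Finset.mul_sum, mul_add, ← Complex.exp_add]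
  congr 1 <;> refine Finset.sum_congr rfl fun σ _ => congrArg Complex.exp ?_ <;>
    simp only [spin, if_true, Bool.false_eq_true, if_false] <;> push_cast
  · linear_combination (2 * t * ∑ j, ((if σ j then 1 else -1 : ℝ) : ℂ)) * Complex.I_sq
  · linear_combination (-2 * t * ∑ j, ((if σ j then 1 else -1 : ℝ) : ℂ)) * Complex.I_sq

lemma CWZ_zero_left (n : ℕ) (x : ℂ) : CWZ n 0 x = (2 * Complex.cos x) ^ n := by
  induction n generalizing x with
  | zero => simp [CWZ]
  | succ n ih =>
    rw [CWZ_succ, mul_zero, sub_zero, add_zero, ih, Complex.two_cos, Complex.exp_zero, pow_succ]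
    ring_nf

lemma CWZ_conj (n : ℕ) (t x : ℂ) : CWZ n (conj t) (conj x) = conj (CWZ n t x) := by
  simp [CWZ_eq_sum_cos, ← Complex.exp_conj, ← Complex.cos_conj, map_ofNat]

/-- The Curie-Weiss partition function at real arguments, as a real number; pairing opposite spin
configurations turns exponentials into cosines, and `2 * k - n` is the total spin of a
configuration with `k` positive spins. -/
noncomputable def cwReal (n : ℕ) (t x : ℝ) : ℝ :=
  ∑ k ∈ Finset.range (n + 1),
    (n.choose k : ℝ) * (Real.exp (t * (2 * k - n) ^ 2) * Real.cos ((2 * k - n) * x))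

lemma CWZ_ofReal (n : ℕ) (t x : ℝ) : CWZ n t x = cwReal n t x := by
  simp [CWZ_eq_sum_cos, cwReal]

lemma cwReal_zero_left (n : ℕ) (x : ℝ) : cwReal n 0 x = (2 * Real.cos x) ^ n := by
  have h := CWZ_ofReal n 0 x
  rw [Complex.ofReal_zero, CWZ_zero_left] at h
  exact_mod_cast h.symm

lemma cwReal_zero_right_pos (n : ℕ) (t : ℝ) : 0 < cwReal n t 0 := by
  refine Finset.sum_pos (fun k hk => ?_) ⟨0, by simp⟩
  have : 0 < n.choose k := Nat.choose_pos (Finset.mem_range_succ_iff.1 hk)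
  simp only [mul_zero, Real.cos_zero, mul_one]
  positivity

lemma cwReal_pi_sub (n : ℕ) (t x : ℝ) : cwReal n t (π - x) = (-1) ^ n * cwReal n t x := by
  rw [cwReal, cwReal, Finset.mul_sum]
  refine Finset.sum_congr rfl fun k _ => ?_
  have h : Real.cos ((2 * k - n) * (π - x)) = (-1) ^ n * Real.cos ((2 * k - n) * x) := by
    have := Real.cos_int_mul_pi_sub ((2 * k - n) * x) (2 * k - n)
    push_cast at this
    rw [mul_sub, this, zpow_sub₀ (by norm_num), zpow_mul]
    simp [← inv_pow]
  rw [h]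
  ring

lemma cwReal_pi_div_two {n : ℕ} (hn : Odd n) (t : ℝ) : cwReal n t (π / 2) = 0 := by
  have h := cwReal_pi_sub n t (π / 2)
  rw [sub_half, hn.neg_one_pow, neg_one_mul] at h
  exact self_eq_neg.1 h

lemma continuous_cwReal_left (n : ℕ) (x : ℝ) : Continuous fun t => cwReal n t x := by
  unfold cwReal
  fun_prop

lemma cwReal_succ (n : ℕ) (t x : ℝ) :
    cwReal (n + 1) t x
      = 2 * Real.exp t *
        (Complex.exp (Complex.I * x) * CWZ n t (x - 2 * Complex.I * t)).re := by
  have hconj : Complex.exp (-(Complex.I * x)) * CWZ n t (x + 2 * Complex.I * t)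
      = conj (Complex.exp (Complex.I * x) * CWZ n t (x - 2 * Complex.I * t)) := by
    rw [map_mul, ← Complex.exp_conj, ← CWZ_conj]
    simp [map_ofNat]
  have h := CWZ_succ n t x
  rw [hconj, Complex.add_conj, CWZ_ofReal] at h
  rw [← Complex.ofReal_inj, h]
  push_cast
  ring

/-! ### Zeros of the real part on the unit circle -/

lemma multiset_prod_eq_norm_mul_exp_sum_arg (M : Multiset ℂ) :
    M.prod = ‖M.prod‖ * Complex.exp ((M.map Complex.arg).sum * Complex.I) := by
  induction M using Multiset.induction with
  | empty => simp
  | cons z M ih =>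
    rw [Multiset.prod_cons, Multiset.map_cons, Multiset.sum_cons, norm_mul]
    nth_rw 1 [ih, ← Complex.norm_mul_exp_arg_mul_I z]
    push_cast
    rw [add_mul, Complex.exp_add]
    ring

lemma exists_finset_cos_eq_zero {θ : ℝ → ℝ} {a b : ℝ} {N : ℕ} (hab : a ≤ b)
    (hc : ContinuousOn θ (Set.Icc a b)) (hθ : θ a + N * π ≤ θ b) :
    ∃ S : Finset ℝ, S.card = N ∧ ∀ x ∈ S, x ∈ Set.Ico a b ∧ Real.cos (θ x) = 0 := by
  have hpi := Real.pi_pos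
  set c : ℤ := ⌈θ a / π - 1 / 2⌉
  have hlow : θ a ≤ (c + 1 / 2) * π := by
    have := Int.le_ceil (θ a / π - 1 / 2)
    rw [← div_le_iff₀ hpi]
    linarith
  have hupp : (c + 1 / 2) * π < θ a + π := by
    have := Int.ceil_lt_add_one (θ a / π - 1 / 2)
    rw [← lt_div_iff₀ hpi, add_div, div_self hpi.ne']
    linarith
  have hex (j : Fin N) : ∃ x ∈ Set.Ico a b, θ x = (c + 1 / 2) * π + j * π := by
    have hj : (j : ℝ) + 1 ≤ N := by exact_mod_cast j.2
    refine intermediate_value_Ico hab hc ⟨?_, ?_⟩ <;> nlinarith [(j : ℕ).cast_nonneg (α := ℝ)]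
  choose x hx hxθ using hex
  have hinj : Function.Injective x := fun i j hij => by
    have h := hxθ i
    rw [hij, hxθ j, add_right_inj, mul_left_inj' hpi.ne', Nat.cast_inj] at h
    exact Fin.ext h.symm
  refine ⟨Finset.univ.map ⟨x, hinj⟩, by simp, ?_⟩
  simp only [Finset.mem_map, Finset.mem_univ, true_and, forall_exists_index,
    forall_apply_eq_imp_iff, Function.Embedding.coeFn_mk]
  refine fun j => ⟨hx j, ?_⟩
  rw [hxθ j, Real.cos_eq_zero_iff]
  exact ⟨c + j, by push_cast; ring⟩

/-- The phase of `exp (i s x) * Q (exp (2 i x))` as a function of `x`; it is continuous when the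
roots of `Q` lie in the open unit disc, as then every `1 - r * exp (-2 i x)` has positive real
part. -/
noncomputable def circlePhase (Q : ℂ[X]) (s : ℤ) (x : ℝ) : ℝ :=
  Q.leadingCoeff.arg + (s + 2 * Q.natDegree) * x
    + ((Q.roots.map fun r => 1 - r * Complex.exp (-(2 * Complex.I * x))).map Complex.arg).sum

lemma exp_mul_eval_eq_norm_mul_exp_circlePhase (Q : ℂ[X]) (s : ℤ) (x : ℝ) :
    Complex.exp (Complex.I * s * x) * Q.eval (Complex.exp (2 * Complex.I * x))
      = ‖Q.eval (Complex.exp (2 * Complex.I * x))‖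
        * Complex.exp (circlePhase Q s x * Complex.I) := by
  set w := Complex.exp (2 * Complex.I * x) with hw
  set M := Q.roots.map fun r => 1 - r * Complex.exp (-(2 * Complex.I * x))
  have hw_norm : ‖w‖ = 1 := by simp [hw, Complex.norm_exp]
  have hsplit := IsAlgClosed.splits Q
  have heval : Q.eval w = Q.leadingCoeff * (w ^ Q.natDegree * M.prod) := by
    rw [hsplit.eval_eq_prod_roots, hsplit.natDegree_eq_card_roots, ← Multiset.prod_replicate,
      ← Multiset.map_const', ← Multiset.prod_map_mul]
    congr 2
    refine Multiset.map_congr rfl fun r _ => ?_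
    rw [Complex.exp_neg, mul_sub, mul_one, mul_left_comm, mul_inv_cancel₀ (Complex.exp_ne_zero _),
      mul_one]
  have hnorm : ‖Q.eval w‖ = ‖Q.leadingCoeff‖ * ‖M.prod‖ := by simp [heval, hw_norm]
  have hphase : Complex.exp (circlePhase Q s x * Complex.I)
      = Complex.exp (Complex.I * s * x) * (Complex.exp (Q.leadingCoeff.arg * Complex.I)
        * (w ^ Q.natDegree * Complex.exp ((M.map Complex.arg).sum * Complex.I))) := by
    have hθ : circlePhase Q s x
        = Q.leadingCoeff.arg + (s + 2 * Q.natDegree) * x + (M.map Complex.arg).sum := rfl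
    rw [hθ, hw, ← Complex.exp_nat_mul, ← Complex.exp_add, ← Complex.exp_add, ← Complex.exp_add]
    push_cast
    ring_nf
  rw [hnorm, hphase, heval]
  nth_rw 1 [multiset_prod_eq_norm_mul_exp_sum_arg M,
    ← Complex.norm_mul_exp_arg_mul_I Q.leadingCoeff]
  push_cast
  ring

lemma one_sub_mem_slitPlane {z : ℂ} (hz : ‖z‖ < 1) : 1 - z ∈ Complex.slitPlane := by
  simpa [sub_eq_add_neg] using Complex.mem_slitPlane_of_norm_lt_one (z := -z) (by simpa using hz)

lemma continuous_circlePhase {Q : ℂ[X]} (hQ : ∀ r ∈ Q.roots, ‖r‖ < 1) (s : ℤ) :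
    Continuous (circlePhase Q s) := by
  unfold circlePhase
  simp only [Multiset.map_map, Function.comp_def]
  refine Continuous.add (by fun_prop) (continuous_multiset_sum _ fun r hr => ?_)
  refine continuous_iff_continuousAt.2 fun x => (Complex.continuousAt_arg ?_).comp (by fun_prop)
  refine one_sub_mem_slitPlane ?_
  simpa [Complex.norm_exp] using hQ r hr

lemma circlePhase_add_pi (Q : ℂ[X]) (s : ℤ) (x : ℝ) :
    circlePhase Q s (x + π) = circlePhase Q s x + (s + 2 * Q.natDegree) * π := by
  have hexp :
      Complex.exp (-(2 * Complex.I * (x + π : ℝ))) = Complex.exp (-(2 * Complex.I * x)) := by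
    rw [Complex.exp_eq_exp_iff_exists_int]
    exact ⟨-1, by push_cast; ring⟩
  rw [circlePhase, circlePhase, hexp]
  ring

-- The Hermite-Biehler principle: zeros of the real part are counted by the winding of the phase.
lemma exists_finset_re_exp_mul_eval_eq_zero {Q : ℂ[X]} (hQ : ∀ r ∈ Q.roots, ‖r‖ < 1) {s : ℤ}
    {N : ℕ} (hN : s + 2 * Q.natDegree = N) (a : ℝ) :
    ∃ S : Finset ℝ, S.card = N ∧ ∀ x ∈ S, x ∈ Set.Ico a (a + π) ∧
      (Complex.exp (Complex.I * s * x) * Q.eval (Complex.exp (2 * Complex.I * x))).re = 0 := by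
  have hwind : circlePhase Q s a + N * π ≤ circlePhase Q s (a + π) := by
    rw [circlePhase_add_pi]
    exact_mod_cast (congrArg (fun k : ℤ => circlePhase Q s a + k * π) hN).ge
  obtain ⟨S, hS, hS0⟩ := exists_finset_cos_eq_zero (by linarith [Real.pi_pos])
    (continuous_circlePhase hQ s).continuousOn hwind
  refine ⟨S, hS, fun x hx => ⟨(hS0 x hx).1, ?_⟩⟩
  rw [exp_mul_eval_eq_norm_mul_exp_circlePhase, Complex.re_ofReal_mul,
    Complex.exp_ofReal_mul_I_re, (hS0 x hx).2, mul_zero]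

/-! ### The Lee-Yang theorem -/

/-- The polynomial in `w = exp (2 i x)` which `CWZ n t x` becomes on clearing denominators; the
Lee-Yang theorem says that its roots lie on the unit circle. -/
noncomputable def cwPoly (n : ℕ) (t : ℝ) : ℂ[X] :=
  ∑ k ∈ Finset.range (n + 1), C ((n.choose k * Real.exp (t * (2 * k - n) ^ 2) : ℝ) : ℂ) * X ^ k

lemma cwPoly_coeff_ne_zero {n k : ℕ} (hk : k ≤ n) (t : ℝ) : (cwPoly n t).coeff k ≠ 0 := by
  have hmem : k ∈ Finset.range (n + 1) := Finset.mem_range_succ_iff.2 hk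
  have hchoose : (n.choose k : ℝ) ≠ 0 := Nat.cast_ne_zero.2 (Nat.choose_pos hk).ne'
  simp only [cwPoly, finsetSum_coeff, coeff_C_mul_X_pow, Finset.sum_ite_eq, hmem, if_true]
  exact Complex.ofReal_ne_zero.2 (mul_ne_zero hchoose (Real.exp_ne_zero _))

lemma cwPoly_ne_zero (n : ℕ) (t : ℝ) : cwPoly n t ≠ 0 := fun h =>
  cwPoly_coeff_ne_zero le_rfl t (by rw [h, coeff_zero])

lemma natDegree_cwPoly (n : ℕ) (t : ℝ) : (cwPoly n t).natDegree = n :=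
  natDegree_eq_of_le_of_coeff_ne_zero
    (natDegree_sum_le_of_forall_le _ _ fun _ hk => (natDegree_C_mul_X_pow_le _ _).trans
      (Finset.mem_range_succ_iff.1 hk))
    (cwPoly_coeff_ne_zero le_rfl t)

lemma CWZ_eq_exp_mul_eval_cwPoly (n : ℕ) (t : ℝ) (z : ℂ) :
    CWZ n t z
      = Complex.exp (-(Complex.I * n * z))
        * (cwPoly n t).eval (Complex.exp (2 * Complex.I * z)) := by
  rw [CWZ_eq_sum_exp, cwPoly, eval_finsetSum, Finset.mul_sum]
  refine Finset.sum_congr rfl fun k _ => ?_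
  have hexp : Complex.exp (Complex.I * z * (2 * k - n))
      = Complex.exp (-(Complex.I * n * z)) * Complex.exp (k * (2 * Complex.I * z)) := by
    rw [← Complex.exp_add]
    ring_nf
  rw [eval_mul, eval_C, eval_pow, eval_X, ← Complex.exp_nat_mul, Complex.exp_add, hexp]
  push_cast
  ring

lemma isRoot_cwPoly_exp_iff {n : ℕ} {t x : ℝ} :
    (cwPoly n t).IsRoot (Complex.exp (2 * Complex.I * x)) ↔ cwReal n t x = 0 := by
  rw [IsRoot.def, ← Complex.ofReal_eq_zero, ← CWZ_ofReal, CWZ_eq_exp_mul_eval_cwPoly,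
    mul_eq_zero_iff_left (Complex.exp_ne_zero _)]

lemma injOn_exp_two_mul_I :
    Set.InjOn (fun x : ℝ => Complex.exp (2 * Complex.I * x)) (Set.Ioo 0 π) := by
  intro x hx y hy hxy
  obtain ⟨m, hm⟩ := Complex.exp_eq_exp_iff_exists_int.1 hxy
  have hm' : x = y + m * π := by
    have h : ((x : ℝ) : ℂ) = ((y + m * π : ℝ) : ℂ) := by
      refine mul_left_cancel₀ (mul_ne_zero two_ne_zero Complex.I_ne_zero) (hm.trans ?_)
      push_cast
      ring
    exact_mod_cast h
  have hlt : (m : ℝ) < 1 := by nlinarith [hx.2, hy.1, Real.pi_pos]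
  have hgt : (-1 : ℝ) < m := by nlinarith [hx.1, hy.2, Real.pi_pos]
  have : m = 0 := by
    have h1 : m < 1 := by exact_mod_cast hlt
    have h2 : -1 < m := by exact_mod_cast hgt
    omega
  simpa [this] using hm'

lemma exp_mul_CWZ_sub (n : ℕ) (t x : ℝ) :
    Complex.exp (Complex.I * x) * CWZ n t (x - 2 * Complex.I * t)
      = Real.exp (-(2 * n * t)) * (Complex.exp (Complex.I * (1 - n : ℤ) * x)
        * ((cwPoly n t).comp (C (Complex.exp (4 * t)) * X)).eval
          (Complex.exp (2 * Complex.I * x))) := by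
  have hw : Complex.exp (2 * Complex.I * (x - 2 * Complex.I * t))
      = Complex.exp (4 * t) * Complex.exp (2 * Complex.I * x) := by
    rw [← Complex.exp_add]
    congr 1
    linear_combination (-4 * t : ℂ) * Complex.I_sq
  have hexp : Complex.exp (Complex.I * x)
        * Complex.exp (-(Complex.I * n * (x - 2 * Complex.I * t)))
      = Real.exp (-(2 * n * t)) * Complex.exp (Complex.I * (1 - n : ℤ) * x) := by
    rw [Complex.ofReal_exp, ← Complex.exp_add, ← Complex.exp_add]
    congr 1
    push_cast
    linear_combination (2 * n * t : ℂ) * Complex.I_sq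
  rw [CWZ_eq_exp_mul_eval_cwPoly, hw, ← mul_assoc, hexp, mul_assoc, eval_comp, eval_mul, eval_C,
    eval_X]

lemma exists_finset_cwReal_succ_eq_zero {n : ℕ} {t : ℝ} (ht : 0 < t)
    (hroots : ∀ w ∈ (cwPoly n t).roots, ‖w‖ = 1) :
    ∃ S : Finset ℝ, S.card = n + 1 ∧ ∀ x ∈ S, x ∈ Set.Ioo 0 π ∧ cwReal (n + 1) t x = 0 := by
  set q : ℂ := Complex.exp (4 * t)
  have hq : 1 < ‖q‖ := by simpa [q, Complex.norm_exp] using ht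
  set Q := (cwPoly n t).comp (C q * X)
  have hdeg : Q.natDegree = n := by
    rw [natDegree_comp, natDegree_C_mul_X q (Complex.exp_ne_zero _), natDegree_cwPoly, mul_one]
  have hQ : ∀ r ∈ Q.roots, ‖r‖ < 1 := by
    intro r hr
    have hqr : q * r ∈ (cwPoly n t).roots := by
      rw [mem_roots (cwPoly_ne_zero n t)]
      simpa [Q, IsRoot, eval_comp] using isRoot_of_mem_roots hr
    have h1 : ‖q‖ * ‖r‖ = 1 := by rw [← norm_mul, hroots _ hqr]
    by_contra! h
    nlinarith
  obtain ⟨S, hS, hS0⟩ := exists_finset_re_exp_mul_eval_eq_zero hQ (s := 1 - n) (N := n + 1)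
    (by rw [hdeg]; push_cast; ring) 0
  have hzero : ∀ x ∈ S, cwReal (n + 1) t x = 0 := fun x hx => by
    rw [cwReal_succ, exp_mul_CWZ_sub, Complex.re_ofReal_mul, (hS0 x hx).2, mul_zero, mul_zero]
  refine ⟨S, hS, fun x hx => ⟨⟨(hS0 x hx).1.1.lt_of_ne ?_, by simpa using (hS0 x hx).1.2⟩,
    hzero x hx⟩⟩
  rintro rfl
  exact (cwReal_zero_right_pos (n + 1) t).ne' (hzero 0 hx)

lemma norm_eq_one_of_mem_roots_cwPoly {n : ℕ} {t : ℝ} {S : Finset ℝ} (hcard : S.card = n)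
    (hS : ∀ x ∈ S, x ∈ Set.Ioo 0 π ∧ cwReal n t x = 0) :
    ∀ w ∈ (cwPoly n t).roots, ‖w‖ = 1 := by
  have hroots : (cwPoly n t).roots
      = (S.image fun x : ℝ => Complex.exp (2 * Complex.I * x)).val := by
    refine roots_eq_of_natDegree_le_card_of_ne_zero (fun w hw => ?_) ?_ (cwPoly_ne_zero n t)
    · obtain ⟨x, hx, rfl⟩ := Finset.mem_image.1 hw
      exact isRoot_cwPoly_exp_iff.2 (hS x hx).2
    · rw [natDegree_cwPoly, Finset.card_image_of_injOn
        (injOn_exp_two_mul_I.mono fun x hx => (hS x hx).1), hcard]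
  intro w hw
  rw [hroots, Finset.mem_val, Finset.mem_image] at hw
  obtain ⟨x, -, rfl⟩ := hw
  simp [Complex.norm_exp]

theorem exists_finset_cwReal_eq_zero {t : ℝ} (ht : 0 < t) (n : ℕ) :
    ∃ S : Finset ℝ, S.card = n ∧ ∀ x ∈ S, x ∈ Set.Ioo 0 π ∧ cwReal n t x = 0 := by
  induction n with
  | zero => exact ⟨∅, by simp⟩
  | succ n ih =>
    obtain ⟨S, hcard, hS⟩ := ih
    exact exists_finset_cwReal_succ_eq_zero ht (norm_eq_one_of_mem_roots_cwPoly hcard hS)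

/-- The polynomial in `cos x` which equals `cwReal n t x`. -/
noncomputable def cwCheb (n : ℕ) (t : ℝ) : ℝ[X] :=
  ∑ k ∈ Finset.range (n + 1),
    C (n.choose k * Real.exp (t * (2 * k - n) ^ 2)) * Chebyshev.T ℝ (2 * k - n)

lemma eval_cos_cwCheb (n : ℕ) (t x : ℝ) : (cwCheb n t).eval (Real.cos x) = cwReal n t x := by
  simp only [cwCheb, cwReal, eval_finsetSum, eval_mul, eval_C, Chebyshev.T_real_cos, mul_assoc]
  push_cast
  rfl

lemma natDegree_cwCheb_le (n : ℕ) (t : ℝ) : (cwCheb n t).natDegree ≤ n := by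
  refine natDegree_sum_le_of_forall_le _ _ fun k hk => (natDegree_C_mul_le _ _).trans ?_
  rw [Finset.mem_range] at hk
  rw [Chebyshev.natDegree_T]
  omega

lemma coeff_cwCheb_self (n : ℕ) (t : ℝ) :
    (cwCheb n t).coeff n = 2 ^ n * Real.exp (t * n ^ 2) := by
  cases n with
  | zero => simp [cwCheb]
  | succ n =>
    have htop (m : ℤ) (hm : m.natAbs = n + 1) : (Chebyshev.T ℝ m).coeff (n + 1) = 2 ^ n := by
      rw [← hm, ← Chebyshev.natDegree_T (R := ℝ), coeff_natDegree, Chebyshev.leadingCoeff_T, hm,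
        Nat.add_sub_cancel]
    have hmid : ∀ k ∈ Finset.range n,
        (Chebyshev.T ℝ (2 * (k + 1 : ℕ) - (n + 1 : ℕ))).coeff (n + 1) = 0 := fun k hk => by
      rw [Finset.mem_range] at hk
      refine coeff_eq_zero_of_natDegree_lt ?_
      rw [Chebyshev.natDegree_T]
      omega
    simp only [cwCheb, finsetSum_coeff, coeff_C_mul]
    rw [Finset.sum_range_succ, Finset.sum_range_succ', Finset.sum_eq_zero
      fun k hk => by rw [hmid k hk, mul_zero], htop _ (by omega), htop _ (by omega)]
    simp only [Nat.choose_zero_right, Nat.choose_self]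
    push_cast
    ring_nf

lemma cwReal_eq_mul_prod {n : ℕ} {t : ℝ} {S : Finset ℝ} (hcard : S.card = n)
    (hS : ∀ x ∈ S, x ∈ Set.Ioo 0 π ∧ cwReal n t x = 0) (z : ℝ) :
    cwReal n t z = 2 ^ n * Real.exp (t * n ^ 2) * ∏ x ∈ S, (Real.cos z - Real.cos x) := by
  have hlead : (cwCheb n t).coeff n ≠ 0 := by
    rw [coeff_cwCheb_self]
    positivity
  have hdeg := natDegree_eq_of_le_of_coeff_ne_zero (natDegree_cwCheb_le n t) hlead
  have hinj : Set.InjOn Real.cos S :=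
    Real.injOn_cos.mono fun x hx => Set.Ioo_subset_Icc_self (hS x hx).1
  have hroots : (cwCheb n t).roots = (S.image Real.cos).val := by
    refine roots_eq_of_natDegree_le_card_of_ne_zero (fun y hy => ?_) ?_ fun h => hlead (by simp [h])
    · obtain ⟨x, hx, rfl⟩ := Finset.mem_image.1 hy
      rw [eval_cos_cwCheb, (hS x hx).2]
    · rw [Finset.card_image_of_injOn hinj, hcard, hdeg]
  have hfac := C_leadingCoeff_mul_prod_multiset_X_sub_C (p := cwCheb n t) (by
    rw [hroots, Finset.card_val, Finset.card_image_of_injOn hinj, hcard, hdeg])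
  rw [leadingCoeff, hdeg, coeff_cwCheb_self, hroots] at hfac
  change C _ * ∏ y ∈ S.image Real.cos, (X - C y) = _ at hfac
  rw [Finset.prod_image hinj] at hfac
  rw [← eval_cos_cwCheb, ← hfac]
  simp [eval_prod]

/-! ### The ordered zeros and their symmetry -/

lemma exists_strictMono_cwReal_eq_zero {t : ℝ} (ht : 0 < t) (n : ℕ) :
    ∃ x : Fin n → ℝ, StrictMono x ∧ ∀ k, x k ∈ Set.Ioo 0 π ∧ cwReal n t (x k) = 0 := by
  obtain ⟨S, hcard, hS⟩ := exists_finset_cwReal_eq_zero ht n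
  exact ⟨S.orderEmbOfFin hcard, (S.orderEmbOfFin hcard).strictMono,
    fun k => hS _ (S.orderEmbOfFin_mem hcard k)⟩

/-- The zeros of `cwReal n t` in `(0, π)`, in increasing order. At `t = 0` they merge into the
`n`-fold zero `π / 2` of `(2 * cos x) ^ n`, which is the value chosen for every `t ≤ 0`. -/
noncomputable def cwZero (n : ℕ) (t : ℝ) : Fin n → ℝ :=
  if ht : 0 < t then (exists_strictMono_cwReal_eq_zero ht n).choose else fun _ => π / 2

lemma cwZero_zero (n : ℕ) (k : Fin n) : cwZero n 0 k = π / 2 := by simp [cwZero]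

lemma strictMono_cwZero {t : ℝ} (ht : 0 < t) (n : ℕ) : StrictMono (cwZero n t) := by
  rw [cwZero, dif_pos ht]
  exact (exists_strictMono_cwReal_eq_zero ht n).choose_spec.1

lemma cwReal_cwZero {t : ℝ} (ht : 0 < t) {n : ℕ} (k : Fin n) :
    cwReal n t (cwZero n t k) = 0 := by
  rw [cwZero, dif_pos ht]
  exact ((exists_strictMono_cwReal_eq_zero ht n).choose_spec.2 k).2

lemma cwZero_mem_Ioo (n : ℕ) (t : ℝ) (k : Fin n) : cwZero n t k ∈ Set.Ioo 0 π := by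
  by_cases ht : 0 < t
  · rw [cwZero, dif_pos ht]
    exact ((exists_strictMono_cwReal_eq_zero ht n).choose_spec.2 k).1
  · rw [cwZero, dif_neg ht]
    exact ⟨by positivity, half_lt_self Real.pi_pos⟩

lemma monotone_cwZero (n : ℕ) (t : ℝ) : Monotone (cwZero n t) := by
  by_cases ht : 0 < t
  · exact (strictMono_cwZero ht n).monotone
  · rw [cwZero, dif_neg ht]
    exact monotone_const

lemma cwReal_eq_mul_prod_cwZero {t : ℝ} (ht : 0 ≤ t) (n : ℕ) (z : ℝ) :
    cwReal n t z
      = 2 ^ n * Real.exp (t * n ^ 2) * ∏ k, (Real.cos z - Real.cos (cwZero n t k)) := by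
  rcases ht.eq_or_lt with rfl | ht
  · simp [cwReal_zero_left, cwZero_zero, mul_pow]
  · have h := cwReal_eq_mul_prod (n := n)
      (S := Finset.univ.map ⟨cwZero n t, (strictMono_cwZero ht n).injective⟩) (by simp)
      (by simpa using fun k => ⟨cwZero_mem_Ioo n t k, cwReal_cwZero ht k⟩) z
    rwa [Finset.prod_map] at h

lemma cwReal_eq_zero_iff {t : ℝ} (ht : 0 < t) {n : ℕ} {z : ℝ} (hz : z ∈ Set.Ioo 0 π) :
    cwReal n t z = 0 ↔ z ∈ Set.range (cwZero n t) := by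
  have hconst : 2 ^ n * Real.exp (t * n ^ 2) ≠ 0 := by positivity
  rw [cwReal_eq_mul_prod_cwZero ht.le, mul_eq_zero_iff_left hconst, Finset.prod_eq_zero_iff]
  simp only [Finset.mem_univ, true_and, sub_eq_zero, Set.mem_range]
  refine exists_congr fun k => ⟨fun h => ?_, fun h => by rw [h]⟩
  exact (Real.injOn_cos (Set.Ioo_subset_Icc_self hz)
    (Set.Ioo_subset_Icc_self (cwZero_mem_Ioo n t k)) h).symm

lemma cwZero_rev {t : ℝ} (ht : 0 < t) {n : ℕ} (k : Fin n) :
    cwZero n t k.rev = π - cwZero n t k := by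
  have hmono : StrictMono fun k : Fin n => π - cwZero n t k.rev := fun i j hij =>
    sub_lt_sub_left (strictMono_cwZero ht n (Fin.rev_lt_rev.2 hij)) π
  have hrange : Set.range (fun k : Fin n => π - cwZero n t k.rev) = Set.range (cwZero n t) := by
    have hmem (k : Fin n) : π - cwZero n t k ∈ Set.range (cwZero n t) := by
      have hk := cwZero_mem_Ioo n t k
      rw [← cwReal_eq_zero_iff ht ⟨sub_pos.2 hk.2, sub_lt_self π hk.1⟩, cwReal_pi_sub,
        cwReal_cwZero ht k, mul_zero]
    ext z
    constructor
    · rintro ⟨k, rfl⟩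
      exact hmem k.rev
    · rintro ⟨k, rfl⟩
      obtain ⟨j, hj⟩ := hmem k
      exact ⟨j.rev, by simp [hj]⟩
  have h := congrFun ((hmono.range_inj (strictMono_cwZero ht n)).1 hrange) k
  linarith

lemma cwZero_lt_pi_div_two_iff {t : ℝ} (ht : 0 < t) {n : ℕ} (k : Fin n) :
    cwZero n t k < π / 2 ↔ 2 * (k : ℕ) + 1 < n := by
  have h : cwZero n t k < π / 2 ↔ k < k.rev := by
    rw [← (strictMono_cwZero ht n).lt_iff_lt, cwZero_rev ht]
    constructor <;> intro h <;> linarith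
  rw [h, Fin.lt_def, Fin.val_rev]
  omega

/-! ### Continuity and the limit of the zeros -/

lemma eq_of_antitone_of_prod_sub_eq {R : Type*} [CommRing R] [IsDomain R] [LinearOrder R] {m : ℕ}
    {y r : Fin m → R} (hy : Antitone y) (hr : Antitone r) {s : Set R} (hs : s.Infinite)
    (h : ∀ z ∈ s, ∏ k, (z - y k) = ∏ k, (z - r k)) : y = r := by
  have hpoly : ∏ k, (X - C (y k)) = ∏ k, (X - C (r k)) :=
    eq_of_infinite_eval_eq _ _ (hs.mono fun z hz => by simpa [eval_prod] using h z hz)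
  have hroots (f : Fin m → R) : (∏ k, (X - C (f k))).roots = (List.ofFn f : Multiset R) := by
    rw [← Fin.univ_val_map, ← roots_multiset_prod_X_sub_C (Finset.univ.val.map f),
      Multiset.map_map]
    rfl
  have hperm : (List.ofFn y).Perm (List.ofFn r) := by
    rw [← Multiset.coe_eq_coe, ← hroots, ← hroots, hpoly]
  exact List.ofFn_injective
    (hperm.eq_of_sortedGE (List.sortedGE_ofFn_iff.2 hy) (List.sortedGE_ofFn_iff.2 hr))

lemma tendsto_of_tendsto_prod_sub {α : Type*} {l : Filter α} {m : ℕ} {y : α → Fin m → ℝ}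
    {r : Fin m → ℝ} {K s : Set ℝ} (hK : IsCompact K) (hs : s.Infinite)
    (hyK : ∀ᶠ t in l, ∀ k, y t k ∈ K) (hy : ∀ᶠ t in l, Antitone (y t)) (hr : Antitone r)
    (h : ∀ z ∈ s, Tendsto (fun t => ∏ k, (z - y t k)) l (𝓝 (∏ k, (z - r k)))) :
    Tendsto y l (𝓝 r) := by
  refine ((isCompact_univ_pi fun _ => hK).inter_right
    isClosed_antitone).tendsto_nhds_of_unique_mapClusterPt ?_ ?_
  · filter_upwards [hyK, hy] with t hyK hy
    exact ⟨fun k _ => hyK k, hy⟩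
  · rintro y' ⟨-, hy'⟩ hcluster
    refine eq_of_antitone_of_prod_sub_eq hy' hr hs fun z hz => ?_
    have hcont : Continuous fun v : Fin m → ℝ => ∏ k, (z - v k) := by fun_prop
    have hz' := hcluster.continuousAt_comp hcont.continuousAt
    exact eq_of_nhds_neBot (hz'.clusterPt.neBot.mono (inf_le_inf_left _ (h z hz)))

lemma tendsto_cwZero {n : ℕ} {l : Filter ℝ} (hl : ∀ᶠ t in l, 0 ≤ t) {r : Fin n → ℝ}
    (hr : Monotone r) (hrmem : ∀ k, r k ∈ Set.Icc 0 π)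
    (h : ∀ z, Tendsto (fun t => cwReal n t z / (2 ^ n * Real.exp (t * n ^ 2))) l
      (𝓝 (∏ k, (Real.cos z - Real.cos (r k))))) :
    Tendsto (cwZero n) l (𝓝 r) := by
  have hanti {x : Fin n → ℝ} (hx : Monotone x) (hxmem : ∀ k, x k ∈ Set.Icc 0 π) :
      Antitone (Real.cos ∘ x) := fun i j hij =>
    Real.strictAntiOn_cos.antitoneOn (hxmem i) (hxmem j) (hx hij)
  have hmem (t : ℝ) (k : Fin n) := Set.Ioo_subset_Icc_self (cwZero_mem_Ioo n t k)
  have hcos : Tendsto (fun t => Real.cos ∘ cwZero n t) l (𝓝 (Real.cos ∘ r)) := by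
    refine tendsto_of_tendsto_prod_sub isCompact_Icc (Set.Icc_infinite (neg_lt_self one_pos))
      (Eventually.of_forall fun t k => Real.cos_mem_Icc _)
      (Eventually.of_forall fun t => hanti (monotone_cwZero n t) (hmem t)) (hanti hr hrmem) ?_
    intro y hy
    rw [← Real.range_cos] at hy
    obtain ⟨z, rfl⟩ := hy
    refine (h z).congr' ?_
    filter_upwards [hl] with t ht
    have : 2 ^ n * Real.exp (t * n ^ 2) ≠ 0 := by positivity
    rw [cwReal_eq_mul_prod_cwZero ht, mul_div_cancel_left₀ _ this]
    rfl
  refine tendsto_pi_nhds.2 fun k => ?_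
  have harccos := (Real.continuous_arccos.tendsto _).comp (tendsto_pi_nhds.1 hcos k)
  simpa only [Function.comp_def, Real.arccos_cos (hrmem k).1 (hrmem k).2,
    Real.arccos_cos (hmem _ k).1 (hmem _ k).2] using harccos

lemma continuousOn_cwZero (n : ℕ) : ContinuousOn (cwZero n) (Set.Ici 0) := by
  intro t₀ ht₀
  refine tendsto_cwZero self_mem_nhdsWithin (monotone_cwZero n t₀)
    (fun k => Set.Ioo_subset_Icc_self (cwZero_mem_Ioo n t₀ k)) fun z => ?_
  have hconst (t : ℝ) : 2 ^ n * Real.exp (t * n ^ 2) ≠ 0 := by positivity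
  have hlim : ∏ k, (Real.cos z - Real.cos (cwZero n t₀ k))
      = cwReal n t₀ z / (2 ^ n * Real.exp (t₀ * n ^ 2)) := by
    rw [cwReal_eq_mul_prod_cwZero ht₀, mul_div_cancel_left₀ _ (hconst t₀)]
  rw [hlim]
  exact (((continuous_cwReal_left n z).div (by fun_prop) hconst).tendsto t₀).mono_left
    nhdsWithin_le_nhds

lemma tendsto_cwReal_div_exp {n : ℕ} (hn : 0 < n) (z : ℝ) :
    Tendsto (fun t => cwReal n t z / Real.exp (t * n ^ 2)) atTop (𝓝 (2 * Real.cos (n * z))) := by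
  obtain ⟨m, rfl⟩ := Nat.exists_eq_succ_of_ne_zero hn.ne'
  set n : ℕ := m.succ
  have hdiv (t : ℝ) : cwReal n t z / Real.exp (t * n ^ 2)
      = ∑ k ∈ Finset.range m, n.choose (k + 1) *
          (Real.exp (t * ((2 * (k + 1 : ℕ) - n) ^ 2 - n ^ 2))
            * Real.cos ((2 * (k + 1 : ℕ) - n) * z))
        + 2 * Real.cos (n * z) := by
    have hend : Real.cos ((2 * (0 : ℕ) - n) * z) = Real.cos (n * z) := by
      rw [← Real.cos_neg]
      congr 1
      push_cast
      ring
    have hend' : (2 * n - n : ℝ) = n := by ring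
    rw [cwReal, Finset.sum_range_succ, Finset.sum_range_succ', add_div, add_div, Finset.sum_div,
      hend, hend', Nat.choose_zero_right, Nat.choose_self, add_assoc]
    congr 1
    · refine Finset.sum_congr rfl fun k _ => ?_
      rw [mul_sub, Real.exp_sub]
      ring
    · simp [← two_mul]
  have hmid : ∀ k ∈ Finset.range m, Tendsto (fun t : ℝ => n.choose (k + 1) *
      (Real.exp (t * ((2 * (k + 1 : ℕ) - n) ^ 2 - n ^ 2))
        * Real.cos ((2 * (k + 1 : ℕ) - n) * z))) atTop (𝓝 0) := fun k hk => by
    have hk' : ((k + 1 : ℕ) : ℝ) < n := by simpa [n] using Finset.mem_range.1 hk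
    have hneg : (2 * (k + 1 : ℕ) - n : ℝ) ^ 2 - n ^ 2 < 0 := by
      have : (0 : ℝ) < (k + 1 : ℕ) := by positivity
      nlinarith
    have hexp := Real.tendsto_exp_atBot.comp (tendsto_id.atTop_mul_const_of_neg hneg)
    simpa using (hexp.mul_const _).const_mul _
  simpa [hdiv] using (tendsto_finsetSum _ hmid).add_const (2 * Real.cos (n * z))

lemma two_mul_cos_nat_mul_eq_prod {n : ℕ} (hn : 0 < n) (z : ℝ) :
    2 * Real.cos (n * z)
      = 2 ^ n * ∏ k : Fin n, (Real.cos z - Real.cos ((2 * k + 1) * π / (2 * n))) := by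
  have hroots : (Chebyshev.T ℝ n).roots
      = (Multiset.range n).map fun k : ℕ => Real.cos ((2 * k + 1) * π / (2 * n)) := by
    rw [Chebyshev.roots_T_real, Finset.image_val, Finset.range_val,
      Multiset.dedup_eq_self.2 (Chebyshev.roots_T_real_nodup n)]
  have hfac := C_leadingCoeff_mul_prod_multiset_X_sub_C (p := Chebyshev.T ℝ n) (by
    rw [hroots, Multiset.card_map, Multiset.card_range, Chebyshev.natDegree_T, Int.natAbs_natCast])
  have heval := congrArg (eval (Real.cos z)) hfac
  rw [hroots, Multiset.map_map, Chebyshev.leadingCoeff_T, Int.natAbs_natCast, eval_mul, eval_C,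
    Chebyshev.T_real_cos, ← Finset.range_val, eval_multiset_prod, Multiset.map_map] at heval
  have hpow : (2 : ℝ) ^ n = 2 * 2 ^ (n - 1) := by rw [← pow_succ', Nat.sub_add_cancel hn]
  rw [Int.cast_natCast] at heval
  rw [Fin.prod_univ_eq_prod_range
    (fun k : ℕ => Real.cos z - Real.cos ((2 * k + 1) * π / (2 * n))) n, hpow, mul_assoc, ← heval]
  simp [Finset.prod]

lemma tendsto_cwZero_atTop (n : ℕ) :
    Tendsto (cwZero n) atTop (𝓝 fun k => (2 * k + 1) * π / (2 * n)) := by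
  rcases n.eq_zero_or_pos with rfl | hn
  · exact tendsto_pi_nhds.2 fun k => k.elim0
  refine tendsto_cwZero (eventually_ge_atTop 0) (fun i j hij => ?_) (fun k => ?_) fun z => ?_
  · have : (i : ℝ) ≤ j := by exact_mod_cast hij
    change (2 * i + 1) * π / (2 * n) ≤ (2 * j + 1) * π / (2 * n)
    gcongr
  · have : (k : ℝ) + 1 ≤ n := by exact_mod_cast k.2
    refine ⟨by positivity, ?_⟩
    rw [div_le_iff₀ (by positivity)]
    nlinarith [Real.pi_pos]
  · have h := (tendsto_cwReal_div_exp hn z).div_const (2 ^ n)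
    rw [two_mul_cos_nat_mul_eq_prod hn, mul_div_cancel_left₀ _ (by positivity)] at h
    exact h.congr fun t => by rw [div_div, mul_comm]

/-! ### Descartes' rule of signs in `t` -/

lemma exists_finset_deriv_eq_zero {f : ℝ → ℝ} (hf : Continuous f) {T : Finset ℝ}
    (hT : ∀ x ∈ T, f x = 0) :
    ∃ T' : Finset ℝ, T.card ≤ T'.card + 1 ∧ ∀ x ∈ T', deriv f x = 0 := by
  rcases hcard : T.card with _ | m
  · exact ⟨∅, by simp⟩
  set e := T.orderEmbOfFin hcard
  have hzero (i : Fin (m + 1)) : f (e i) = 0 := hT _ (T.orderEmbOfFin_mem hcard i)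
  have hrolle (i : Fin m) : ∃ c ∈ Set.Ioo (e i.castSucc) (e i.succ), deriv f c = 0 :=
    exists_deriv_eq_zero (e.strictMono i.castSucc_lt_succ) hf.continuousOn
      ((hzero _).trans (hzero _).symm)
  choose c hc hc0 using hrolle
  have hmono : StrictMono c := fun i j hij =>
    (hc i).2.trans_le (e.monotone (Fin.succ_le_castSucc_iff.2 hij)) |>.trans (hc j).1
  refine ⟨Finset.univ.map ⟨c, hmono.injective⟩, by simp, ?_⟩
  simpa using hc0

lemma exists_finset_sum_exp_eq_zero {ι : Type*} (s : Finset ι) (a l : ι → ℝ) (μ : ℝ) {T : Finset ℝ}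
    (hT : ∀ t ∈ T, ∑ i ∈ s, a i * Real.exp (t * l i) = 0) :
    ∃ T' : Finset ℝ, T.card ≤ T'.card + 1 ∧
      ∀ t ∈ T', ∑ i ∈ s, a i * (μ - l i) * Real.exp (t * l i) = 0 := by
  have hfac (b : ι → ℝ) (t : ℝ) : ∑ i ∈ s, b i * Real.exp (t * (l i - μ))
      = Real.exp (-(t * μ)) * ∑ i ∈ s, b i * Real.exp (t * l i) := by
    rw [Finset.mul_sum]
    refine Finset.sum_congr rfl fun i _ => ?_
    rw [mul_left_comm, ← Real.exp_add]
    ring_nf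
  have hderiv (t : ℝ) : HasDerivAt (fun t => ∑ i ∈ s, a i * Real.exp (t * (l i - μ)))
      (-∑ i ∈ s, a i * (μ - l i) * Real.exp (t * (l i - μ))) t := by
    rw [← Finset.sum_neg_distrib]
    exact HasDerivAt.fun_sum fun i _ =>
      ((hasDerivAt_mul_const (l i - μ)).exp.const_mul (a i)).congr_deriv (by ring)
  obtain ⟨T', hcard, hT'⟩ := exists_finset_deriv_eq_zero
    (continuous_iff_continuousAt.2 fun t => (hderiv t).continuousAt)
    fun t ht => by rw [hfac, hT t ht, mul_zero]
  refine ⟨T', hcard, fun t ht => ?_⟩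
  have h := hT' t ht
  rw [(hderiv t).deriv, hfac, neg_eq_zero] at h
  exact (mul_eq_zero_iff_left (Real.exp_pos _).ne').1 h

-- Descartes' rule of signs: each factor `μ j - l i` accounts for one sign change of `a`.
lemma card_zeros_sum_exp_le {ι κ : Type*} (s : Finset ι) (a l : ι → ℝ) (u : Finset κ) (μ : κ → ℝ)
    (hnonneg : ∀ i ∈ s, 0 ≤ a i * ∏ j ∈ u, (μ j - l i))
    (hpos : ∃ i ∈ s, 0 < a i * ∏ j ∈ u, (μ j - l i))
    {T : Finset ℝ} (hT : ∀ t ∈ T, ∑ i ∈ s, a i * Real.exp (t * l i) = 0) :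
    T.card ≤ u.card := by
  induction u using Finset.cons_induction generalizing a T with
  | empty =>
    simp only [Finset.prod_empty, mul_one] at hnonneg hpos
    obtain ⟨i, hi, hai⟩ := hpos
    rw [Finset.card_empty, nonpos_iff_eq_zero, Finset.card_eq_zero,
      Finset.eq_empty_iff_forall_notMem]
    refine fun t ht => (Finset.sum_pos' (fun j hj => ?_) ⟨i, hi, ?_⟩).ne' (hT t ht)
    · exact mul_nonneg (hnonneg j hj) (Real.exp_pos _).le
    · exact mul_pos hai (Real.exp_pos _)
  | cons k u hk ih =>
    obtain ⟨T', hcard, hT'⟩ := exists_finset_sum_exp_eq_zero s a l (μ k) hT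
    simp only [Finset.prod_cons, ← mul_assoc] at hnonneg hpos
    rw [Finset.card_cons]
    exact hcard.trans (Nat.succ_le_succ (ih _ hnonneg hpos hT'))

lemma cos_mul_prod_pos (k : ℕ) {z : ℝ} (hz : |z| < π / 2) :
    0 < Real.cos z * ∏ j ∈ Finset.range k, (((2 * j + 1) * (π / 2)) ^ 2 - z ^ 2) := by
  refine mul_pos (Real.cos_pos_of_mem_Ioo (abs_lt.1 hz)) (Finset.prod_pos fun j _ => sub_pos.2 ?_)
  refine sq_lt_sq.2 (hz.trans_le ((le_mul_of_one_le_left (by positivity) ?_).trans (le_abs_self _)))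
  linarith [j.cast_nonneg (α := ℝ)]

lemma cos_mul_prod_nonneg {k : ℕ} {z : ℝ} (hz : |z| ≤ (2 * k + 1) * (π / 2)) :
    0 ≤ Real.cos z * ∏ j ∈ Finset.range k, (((2 * j + 1) * (π / 2)) ^ 2 - z ^ 2) := by
  rw [← Real.cos_abs, ← sq_abs z]
  have hz0 := abs_nonneg z
  generalize |z| = z at hz hz0
  induction k with
  | zero => simpa using Real.cos_nonneg_of_mem_Icc ⟨by linarith [Real.pi_pos], by simpa using hz⟩
  | succ k ih =>
    by_cases h : z ≤ (2 * k + 1) * (π / 2)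
    · rw [Finset.prod_range_succ, ← mul_assoc]
      refine mul_nonneg (ih h) (sub_nonneg.2 ?_)
      gcongr
    · push Not at h
      push_cast at hz
      have hcos : 0 ≤ Real.cos (z - (k + 1 : ℕ) * π) := by
        refine Real.cos_nonneg_of_mem_Icc ⟨?_, ?_⟩ <;> push_cast <;> linarith
      have hprod : 0 ≤ ∏ j ∈ Finset.range (k + 1), (z ^ 2 - ((2 * j + 1) * (π / 2)) ^ 2) := by
        refine Finset.prod_nonneg fun j hj => sub_nonneg.2 ?_
        have hjk : (j : ℝ) ≤ k := by exact_mod_cast Finset.mem_range_succ_iff.1 hj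
        have : (2 * j + 1) * (π / 2) ≤ z := le_trans (by gcongr) h.le
        gcongr
      have hneg := Finset.prod_neg (s := Finset.range (k + 1))
        fun j : ℕ => ((2 * j + 1) * (π / 2)) ^ 2 - z ^ 2
      simp only [neg_sub, Finset.card_range] at hneg
      rw [Real.cos_sub_nat_mul_pi] at hcos
      rw [hneg] at hprod
      have hsq : ((-1 : ℝ) ^ (k + 1)) * (-1) ^ (k + 1) = 1 := by rw [← mul_pow]; simp
      have h := mul_nonneg hcos hprod
      rwa [mul_mul_mul_comm, hsq, one_mul] at h

lemma card_zeros_cwReal_le {n k : ℕ} {x : ℝ} (hx : x ∈ Set.Ioo 0 (π / 2))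
    (hxk : n * x ≤ (2 * k + 1) * (π / 2)) {T : Finset ℝ} (hT : ∀ t ∈ T, cwReal n t x = 0) :
    T.card ≤ k := by
  have hx0 : x ≠ 0 := hx.1.ne'
  have hprod (i : ℕ) : n.choose i * Real.cos ((2 * i - n) * x) *
        ∏ j ∈ Finset.range k, (((2 * j + 1) * (π / 2) / x) ^ 2 - (2 * i - n) ^ 2)
      = n.choose i / (x ^ 2) ^ k * (Real.cos ((2 * i - n) * x) *
        ∏ j ∈ Finset.range k, (((2 * j + 1) * (π / 2)) ^ 2 - ((2 * i - n) * x) ^ 2)) := by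
    have hfac (j : ℕ) : (((2 * j + 1) * (π / 2) / x) ^ 2 - (2 * i - n) ^ 2)
        = (((2 * j + 1) * (π / 2)) ^ 2 - ((2 * i - n) * x) ^ 2) / x ^ 2 := by field_simp
    simp only [hfac, Finset.prod_div_distrib, Finset.prod_const, Finset.card_range]
    ring
  rw [← Finset.card_range k]
  refine card_zeros_sum_exp_le (Finset.range (n + 1))
    (fun i => n.choose i * Real.cos ((2 * i - n) * x)) (fun i => (2 * i - n) ^ 2)
    (Finset.range k) (fun j => ((2 * j + 1) * (π / 2) / x) ^ 2) (fun i hi => ?_)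
    ⟨n / 2, Finset.mem_range_succ_iff.2 (Nat.div_le_self n 2), ?_⟩ fun t ht => ?_
  · have hin : (i : ℝ) ≤ n := by exact_mod_cast Finset.mem_range_succ_iff.1 hi
    rw [hprod]
    refine mul_nonneg (by positivity) (cos_mul_prod_nonneg (le_trans ?_ hxk))
    rw [abs_mul, abs_of_pos hx.1]
    refine mul_le_mul_of_nonneg_right (abs_le.2 ⟨?_, ?_⟩) hx.1.le <;>
      linarith [i.cast_nonneg (α := ℝ)]
  · have hchoose : 0 < n.choose (n / 2) := Nat.choose_pos (Nat.div_le_self n 2)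
    have habs : |(2 * (n / 2 : ℕ) - n : ℝ)| ≤ 1 := by
      have h : |(2 * (n / 2 : ℕ) - n : ℤ)| ≤ 1 := by rw [abs_le]; omega
      exact_mod_cast h
    rw [hprod]
    refine mul_pos (by have := hx.1; positivity) (cos_mul_prod_pos k (lt_of_le_of_lt ?_ hx.2))
    rw [abs_mul, abs_of_pos hx.1]
    exact mul_le_of_le_one_left hx.1.le habs
  · rw [← hT t ht, cwReal]
    exact Finset.sum_congr rfl fun i _ => by ring

lemma card_le_of_cwZero_eq {n k : ℕ} {x : ℝ} (hx : x ∈ Set.Ioo 0 (π / 2))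
    (hxk : n * x ≤ (2 * k + 1) * (π / 2)) {P : Finset (Fin n × ℝ)}
    (hP : ∀ p ∈ P, 0 < p.2 ∧ cwZero n p.2 p.1 = x) : P.card ≤ k := by
  have hinj : Set.InjOn Prod.snd (P : Set (Fin n × ℝ)) := by
    rintro ⟨i, t⟩ hi ⟨j, _⟩ hj rfl
    have hij := (hP _ hi).2.trans (hP _ hj).2.symm
    exact congrArg (·, t) ((strictMono_cwZero (hP _ hi).1 n).injective hij)
  rw [← Finset.card_image_of_injOn hinj]
  refine card_zeros_cwReal_le hx hxk fun t ht => ?_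
  obtain ⟨p, hp, rfl⟩ := Finset.mem_image.1 ht
  rw [← (hP p hp).2, cwReal_cwZero (hP p hp).1]

lemma exists_pos_cwZero_eq {n : ℕ} {j : Fin n} {x : ℝ} (hx : x < π / 2)
    (hlim : (2 * j + 1) * π / (2 * n) < x) : ∃ t, 0 < t ∧ cwZero n t j = x := by
  obtain ⟨b, hb, hb0⟩ := (((tendsto_pi_nhds.1 (tendsto_cwZero_atTop n) j).eventually_lt_const
    hlim).and (eventually_gt_atTop 0)).exists
  have hcont : ContinuousOn (fun t => cwZero n t j) (Set.Icc 0 b) :=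
    (continuousOn_pi.1 (continuousOn_cwZero n) j).mono Set.Icc_subset_Ici_self
  obtain ⟨t, ht, rfl⟩ := intermediate_value_Ioo' hb0.le hcont ⟨hb, by rwa [cwZero_zero]⟩
  exact ⟨t, ht.1, rfl⟩

lemma exists_le_mul_forall_lt_div_lt {n : ℕ} {x : ℝ} (hx : x ≤ π) :
    ∃ k ≤ n, n * x ≤ (2 * k + 1) * (π / 2) ∧ ∀ j < k, (2 * j + 1) * π / (2 * n) < x := by
  have hpi := Real.pi_pos
  have hkn : ⌈n * x / π - 1 / 2⌉₊ ≤ n := by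
    refine Nat.ceil_le.2 ?_
    rw [sub_le_iff_le_add, div_le_iff₀ hpi]
    nlinarith [n.cast_nonneg (α := ℝ)]
  refine ⟨⌈n * x / π - 1 / 2⌉₊, hkn, ?_, fun j hj => ?_⟩
  · have h := Nat.le_ceil (n * x / π - 1 / 2)
    rw [sub_le_iff_le_add, div_le_iff₀ hpi] at h
    linarith
  · have hn : (0 : ℝ) < n := Nat.cast_pos.2 ((Nat.zero_le j).trans_lt (hj.trans_le hkn))
    have h := Nat.lt_ceil.1 hj
    rw [lt_sub_iff_add_lt, lt_div_iff₀ hpi] at h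
    rw [div_lt_iff₀ (by positivity)]
    linarith

-- If the `i`-th curve took the value `x` twice, these two times and the crossing times of the other
-- curves whose limit lies below `x` would be too many zeros of `t ↦ cwReal n t x`.
lemma injOn_cwZero {n : ℕ} {i : Fin n} (hi : 2 * (i : ℕ) + 1 < n) :
    Set.InjOn (fun t => cwZero n t i) (Set.Ioi 0) := by
  intro t₁ ht₁ t₂ ht₂ ht
  by_contra hne
  set x := cwZero n t₁ i
  have hxmem : x ∈ Set.Ioo 0 (π / 2) :=
    ⟨(cwZero_mem_Ioo n t₁ i).1, (cwZero_lt_pi_div_two_iff ht₁ i).2 hi⟩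
  obtain ⟨k, hkn, hxk, hlim⟩ := exists_le_mul_forall_lt_div_lt (n := n) (cwZero_mem_Ioo n t₁ i).2.le
  have hcross (j : Fin n) : ∃ t, (j : ℕ) < k → 0 < t ∧ cwZero n t j = x := by
    by_cases hj : (j : ℕ) < k
    · exact (exists_pos_cwZero_eq hxmem.2 (hlim j hj)).imp fun _ h _ => h
    · exact ⟨0, fun h => absurd h hj⟩
  choose τ hτ using hcross
  let J := (Finset.univ.filter fun j : Fin n => (j : ℕ) < k).erase i
  let P : Finset (Fin n × ℝ) := {(i, t₁), (i, t₂)} ∪ J.image fun j => (j, τ j)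
  have hP : P.card ≤ k := card_le_of_cwZero_eq hxmem hxk fun p hp => by
    simp only [P, J, Finset.mem_union, Finset.mem_insert, Finset.mem_singleton, Finset.mem_image,
      Finset.mem_erase, Finset.mem_filter, Finset.mem_univ, true_and] at hp
    obtain (rfl | rfl) | ⟨j, ⟨-, hj⟩, rfl⟩ := hp
    exacts [⟨ht₁, rfl⟩, ⟨ht₂, ht.symm⟩, hτ j hj]
  have hdisj : Disjoint {(i, t₁), (i, t₂)} (J.image fun j => (j, τ j)) := by
    simp [J]
  have hJ : k - 1 ≤ J.card := by
    refine le_trans ?_ Finset.pred_card_le_card_erase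
    rw [Fin.card_filter_val_lt, min_eq_right hkn]
  rw [Finset.card_union_of_disjoint hdisj, Finset.card_pair (by simpa using hne),
    Finset.card_image_of_injective _ fun _ _ h => congrArg Prod.fst h] at hP
  omega

lemma strictAntiOn_Ici_of_continuousOn_of_injOn_Ioi {f : ℝ → ℝ} {a : ℝ}
    (hc : ContinuousOn f (Set.Ici a)) (hi : Set.InjOn f (Set.Ioi a))
    (ha : ∀ t, a < t → f t < f a) : StrictAntiOn f (Set.Ici a) := by
  have hinj : Set.InjOn f (Set.Ici a) := by
    rw [← Set.Ioi_insert, Set.injOn_insert Set.self_notMem_Ioi]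
    refine ⟨hi, ?_⟩
    rintro ⟨t, ht, hta⟩
    exact (ha t ht).ne hta
  intro s hs t ht hst
  have hat : a < t := hs.trans_lt hst
  exact (hc.mono Set.Icc_subset_Ici_self).strictAntiOn_of_injOn_Icc hat.le (ha t hat).le
    (hinj.mono Set.Icc_subset_Ici_self) ⟨hs, hst.le⟩ ⟨ht, le_rfl⟩ hst

lemma strictAntiOn_cwZero {n : ℕ} {i : Fin n} (hi : 2 * (i : ℕ) + 1 < n) :
    StrictAntiOn (fun t => cwZero n t i) (Set.Ici 0) := by
  refine strictAntiOn_Ici_of_continuousOn_of_injOn_Ioi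
    (continuousOn_pi.1 (continuousOn_cwZero n) i) (injOn_cwZero hi) fun t ht => ?_
  rw [cwZero_zero]
  exact (cwZero_lt_pi_div_two_iff ht i).2 hi

lemma image_val_add_one_setOf_two_mul_add_one_lt (n : ℕ) :
    (fun i : Fin n => (i : ℕ) + 1) '' {i | 2 * (i : ℕ) + 1 < n} = Set.Icc 1 (n / 2) := by
  ext k
  constructor
  · rintro ⟨i, hi : 2 * (i : ℕ) + 1 < n, rfl⟩
    exact show 1 ≤ (i : ℕ) + 1 ∧ (i : ℕ) + 1 ≤ n / 2 by omega
  · rintro ⟨h1, h2⟩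
    exact ⟨⟨k - 1, by omega⟩, show 2 * (k - 1) + 1 < n by omega, Nat.sub_add_cancel h1⟩

lemma setOf_CWZ_eq_zero {t : ℝ} (ht : 0 < t) (n : ℕ) :
    {z : ℝ | z ∈ Set.Ioo 0 (π / 2) ∧ CWZ n t z = 0}
      = cwZero n t '' {i | 2 * (i : ℕ) + 1 < n} := by
  ext z
  simp only [Set.mem_ofPred_eq, Set.mem_image, CWZ_ofReal, Complex.ofReal_eq_zero,
    ← cwZero_lt_pi_div_two_iff ht]
  constructor
  · rintro ⟨hz, h0⟩
    obtain ⟨i, rfl⟩ := (cwReal_eq_zero_iff ht ⟨hz.1, hz.2.trans (half_lt_self Real.pi_pos)⟩).1 h0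
    exact ⟨i, hz.2, rfl⟩
  · rintro ⟨i, hi, rfl⟩
    exact ⟨⟨(cwZero_mem_Ioo n t i).1, hi⟩, cwReal_cwZero ht i⟩

theorem stmt13_general (n : ℕ) :
    (Odd n → ∀ t : ℝ, CWZ n t ((π / 2 : ℝ) : ℂ) = 0) ∧
    ∃ x : ℕ → ℝ → ℝ,
      (∀ k ∈ Finset.Icc 1 (n / 2), ContinuousOn (x k) (Set.Ici 0)) ∧
      (∀ k ∈ Finset.Icc 1 (n / 2), x k 0 = π / 2) ∧
      (∀ t : ℝ, 0 < t →
        (∀ k ∈ Finset.Icc 1 (n / 2), 0 < x k t ∧ x k t < π / 2) ∧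
        (∀ k, 1 ≤ k → k < n / 2 → x k t < x (k + 1) t) ∧
        {z : ℝ | z ∈ Set.Ioo 0 (π / 2) ∧ CWZ n t z = 0}
          = (fun k => x k t) '' Set.Icc 1 (n / 2)) ∧
      (∀ k ∈ Finset.Icc 1 (n / 2),
        StrictAntiOn (x k) (Set.Ici 0) ∧
        Filter.Tendsto (x k) Filter.atTop
          (nhds ((2 * (k : ℝ) - 1) * π / (2 * (n : ℝ))))) := by
  let x (k : ℕ) (t : ℝ) : ℝ := if hk : k - 1 < n then cwZero n t ⟨k - 1, hk⟩ else 0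
  have hx (i : Fin n) : x (i + 1) = fun t => cwZero n t i := by simp [x]
  refine ⟨fun hn t => by rw [CWZ_ofReal, cwReal_pi_div_two hn, Complex.ofReal_zero], x, ?_⟩
  simp only [Finset.mem_Icc, ← Set.mem_Icc, ← image_val_add_one_setOf_two_mul_add_one_lt,
    Set.forall_mem_image, Set.image_image, hx]
  refine ⟨fun i _ => continuousOn_pi.1 (continuousOn_cwZero n) i, fun i _ => cwZero_zero n i,
    fun t ht => ⟨fun i hi => ?_, fun k hk1 hk => ?_, setOf_CWZ_eq_zero ht n⟩,
    fun i hi => ⟨strictAntiOn_cwZero hi, ?_⟩⟩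
  · exact ⟨(cwZero_mem_Ioo n t i).1, (cwZero_lt_pi_div_two_iff ht i).2 hi⟩
  · obtain ⟨j, rfl⟩ := Nat.exists_eq_add_of_le' hk1
    rw [hx ⟨j, by omega⟩, hx ⟨j + 1, by omega⟩]
    exact strictMono_cwZero ht n (Fin.mk_lt_mk.2 j.lt_succ_self)
  · convert tendsto_pi_nhds.1 (tendsto_cwZero_atTop n) i using 2
    push_cast
    ring

theorem stmt13 (n : ℕ) (hn : 0 < n) (hodd : Odd n) :
    (∀ t : ℝ, 0 ≤ t → CWZ n t ((π / 2 : ℝ) : ℂ) = 0) ∧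
    ∃ x : ℕ → ℝ → ℝ,
      (∀ k ∈ Finset.Icc 1 ((n - 1) / 2), ContinuousOn (x k) (Set.Ici 0)) ∧
      (∀ k ∈ Finset.Icc 1 ((n - 1) / 2), x k 0 = π / 2) ∧
      (∀ t : ℝ, 0 < t →
        (∀ k ∈ Finset.Icc 1 ((n - 1) / 2), 0 < x k t ∧ x k t < π / 2) ∧
        (∀ k, 1 ≤ k → k < (n - 1) / 2 → x k t < x (k + 1) t) ∧
        {z : ℝ | z ∈ Set.Ioo 0 (π / 2) ∧ CWZ n t z = 0}
          = (fun k => x k t) '' Set.Icc 1 ((n - 1) / 2)) ∧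
      (∀ k ∈ Finset.Icc 1 ((n - 1) / 2),
        StrictAntiOn (x k) (Set.Ici 0) ∧
        Filter.Tendsto (x k) Filter.atTop
          (nhds ((2 * (k : ℝ) - 1) * π / (2 * (n : ℝ))))) := by
  have hhalf : (n - 1) / 2 = n / 2 := by obtain ⟨m, rfl⟩ := hodd; omega
  rw [hhalf]
  exact (stmt13_general n).imp_left fun h t _ => h hodd t
end

section
/- Let n be a positive integer and t > 0. Then all zeros of the entire function x ↦ Z_{n,t}(x) are simple; that is, for every x ∈ ℂ with Z_{n,t}(x) = 0, the derivative Z_{n,t}′(x) ≠ 0. -/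
open scoped Real

/-!
With `q = exp (-4 t)` and `z = exp (2 i x)`, the partition function is a nonvanishing factor times
`P_n(z)`, where `P_n = ∑ k, (n choose k) q ^ (k (n - k)) X ^ k`. Let `S_n(z) = q ^ n P_n(z / q)`, a
polynomial in `q` and `z`. Then
`P_{n+1}(z) = P_n(q z) + z S_n(z)` and `P_{n+1}'(z) = (n + 1) S_n(z)`.
For `|q| ≤ 1` all zeros of `P_n` lie on the unit circle (Lee and Yang). By the symmetry
`z ^ n P_n(1 / z) = P_n(z)` it is enough to exclude the open unit disc, which is done by induction
from the first recurrence: comparing root by root, `|S_n(z)| ≤ |P_n(q z)|` when no zero of `P_n` is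
closer to the origin than `z`. At a double zero `z` of `P_{n+1}` both `S_n(z)` and `P_n(q z)`
vanish, so `z` and `q z` both lie on the unit circle, which is impossible if `|q| < 1`.
-/

open Polynomial ComplexConjugate

theorem eval_scaleRoots_eq_prod_roots {R : Type*} [CommRing R] [IsDomain R] {p : R[X]}
    (hp : p.Splits) (r x : R) :
    (p.scaleRoots r).eval x = p.leadingCoeff * (p.roots.map fun a ↦ x - r * a).prod := by
  have scaleRoots_prod (s : Multiset R) :
      ((s.map fun a ↦ X - C a).prod.scaleRoots r) = (s.map fun a ↦ X - C (r * a)).prod := by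
    induction s using Multiset.induction_on with
    | empty => simp
    | cons a s ih =>
      simp only [Multiset.map_cons, Multiset.prod_cons, mul_scaleRoots_of_noZeroDivisors,
        X_sub_C_scaleRoots, mul_comm a r, ih]
  conv_lhs => rw [hp.eq_prod_roots]
  simp [mul_scaleRoots_of_noZeroDivisors, scaleRoots_prod, eval_multiset_prod]

section RCLike

variable {𝕜 : Type*} [RCLike 𝕜]

section InnerProductSpace

variable {E : Type*} [SeminormedAddCommGroup E] [InnerProductSpace 𝕜 E]

theorem norm_smul_sub_sq_sub_norm_sub_conj_smul_sq (q : 𝕜) (z a : E) :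
    ‖q • z - a‖ ^ 2 - ‖z - conj q • a‖ ^ 2 = (1 - ‖q‖ ^ 2) * (‖a‖ ^ 2 - ‖z‖ ^ 2) := by
  rw [norm_sub_sq (𝕜 := 𝕜), norm_sub_sq (𝕜 := 𝕜), inner_smul_left, inner_smul_right, norm_smul,
    norm_smul, RCLike.norm_conj]
  ring

theorem norm_sub_conj_smul_le {q : 𝕜} (hq : ‖q‖ ≤ 1) {z a : E} (hza : ‖z‖ ≤ ‖a‖) :
    ‖z - conj q • a‖ ≤ ‖q • z - a‖ := by
  refine le_of_sq_le_sq ?_ (norm_nonneg _)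
  rw [← sub_nonneg, norm_smul_sub_sq_sub_norm_sub_conj_smul_sq]
  exact mul_nonneg (sub_nonneg.2 (pow_le_one₀ (norm_nonneg q) hq))
    (sub_nonneg.2 (pow_le_pow_left₀ (norm_nonneg z) hza 2))

end InnerProductSpace

theorem norm_eval_scaleRoots_conj_le {p : 𝕜[X]} (hp : p.Splits) {q z : 𝕜} (hq : ‖q‖ ≤ 1)
    (hz : ∀ a ∈ p.roots, ‖z‖ ≤ ‖a‖) :
    ‖(p.scaleRoots (conj q)).eval z‖ ≤ ‖p.eval (q * z)‖ := by
  rw [eval_scaleRoots_eq_prod_roots hp, hp.eval_eq_prod_roots, norm_mul, norm_mul]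
  refine mul_le_mul_of_nonneg_left ?_ (norm_nonneg _)
  have norm_prod (f : 𝕜 → 𝕜) : ‖(p.roots.map f).prod‖ = (p.roots.map fun a ↦ ‖f a‖).prod := by
    simpa [Function.comp_def] using map_multiset_prod (normHom (α := 𝕜)) (p.roots.map f)
  rw [norm_prod, norm_prod]
  exact Multiset.prod_map_le_prod_map₀ _ _ (fun _ _ ↦ norm_nonneg _)
    fun a ha ↦ norm_sub_conj_smul_le hq (hz a ha)

end RCLike

section Algebra

variable {R : Type*} [CommSemiring R]

/-- The Lee–Yang polynomial `∑ k, (n choose k) q ^ (k (n - k)) X ^ k` of the complete graph on `n`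
vertices: the partition function of the Ising model, where `X` marks the up spins and each pair of
opposite spins has weight `q`. -/
noncomputable def leeYangPoly (q : R) (n : ℕ) : R[X] :=
  ∑ k ∈ Finset.range (n + 1), monomial k (n.choose k * q ^ (k * (n - k)))

theorem coeff_leeYangPoly (q : R) (n k : ℕ) :
    (leeYangPoly q n).coeff k = n.choose k * q ^ (k * (n - k)) := by
  simp only [leeYangPoly, finsetSum_coeff, coeff_monomial, Finset.sum_ite_eq', Finset.mem_range]
  split_ifs with hk
  · rfl
  · simp [Nat.choose_eq_zero_of_lt (show n < k by omega)]

theorem leeYangPoly_zero (q : R) : leeYangPoly q 0 = 1 := by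
  simp [leeYangPoly]

theorem eval_leeYangPoly (q : R) (n : ℕ) (z : R) :
    (leeYangPoly q n).eval z =
      ∑ k ∈ Finset.range (n + 1), n.choose k * q ^ (k * (n - k)) * z ^ k := by
  simp [leeYangPoly, eval_finsetSum]

section Nontrivial

variable [Nontrivial R]

theorem natDegree_leeYangPoly (q : R) (n : ℕ) : (leeYangPoly q n).natDegree = n := by
  refine natDegree_eq_of_le_of_coeff_ne_zero (natDegree_le_iff_coeff_eq_zero.2 fun k hk ↦ ?_) ?_
  · simp [coeff_leeYangPoly, Nat.choose_eq_zero_of_lt hk]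
  · simp [coeff_leeYangPoly]

theorem reverse_leeYangPoly (q : R) (n : ℕ) : (leeYangPoly q n).reverse = leeYangPoly q n := by
  ext k
  rw [coeff_reverse, natDegree_leeYangPoly]
  rcases le_or_gt k n with hk | hk
  · rw [revAt_le hk, coeff_leeYangPoly, coeff_leeYangPoly, Nat.choose_symm hk,
      Nat.sub_sub_self hk, mul_comm k]
  · rw [revAt_eq_self_of_lt hk]

theorem leeYangPoly_succ (q : R) (n : ℕ) :
    leeYangPoly q (n + 1) =
      (leeYangPoly q n).comp (C q * X) + X * (leeYangPoly q n).scaleRoots q := by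
  ext k
  rw [coeff_add, comp_C_mul_X_coeff]
  cases k with
  | zero => simp [coeff_leeYangPoly]
  | succ k =>
    simp only [coeff_X_mul, coeff_scaleRoots, natDegree_leeYangPoly, coeff_leeYangPoly,
      Nat.choose_succ_succ, Nat.add_sub_add_right]
    rcases le_or_gt n k with hk | hk
    · simp [Nat.choose_eq_zero_of_lt (Nat.lt_succ_of_le hk), Nat.sub_eq_zero_of_le hk]
    · obtain ⟨m, rfl⟩ := Nat.exists_eq_add_of_lt hk
      rw [show k + m + 1 - k = m + 1 by omega, show k + m + 1 - (k + 1) = m by omega]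
      push_cast
      ring

theorem derivative_leeYangPoly_succ (q : R) (n : ℕ) :
    derivative (leeYangPoly q (n + 1)) = (n + 1 : R[X]) * (leeYangPoly q n).scaleRoots q := by
  ext k
  have choose_succ : ((n + 1).choose (k + 1) : R) * (k + 1) = (n + 1) * n.choose k := by
    exact_mod_cast congrArg (Nat.cast (R := R)) (Nat.add_one_mul_choose_eq n k).symm
  rw [coeff_derivative, coeff_leeYangPoly, Nat.add_sub_add_right, mul_right_comm, choose_succ,
    ← Nat.cast_succ, ← Nat.cast_succ, coeff_natCast_mul, coeff_scaleRoots, coeff_leeYangPoly,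
    natDegree_leeYangPoly]
  ring

end Nontrivial

end Algebra

section Zeros

variable {q : ℝ} {n : ℕ} {z : ℂ}

theorem eval_leeYangPoly_ne_zero_of_norm_lt_one (hq : |q| ≤ 1) (hz : ‖z‖ < 1) :
    (leeYangPoly (q : ℂ) n).eval z ≠ 0 := by
  induction n generalizing z with
  | zero => simp [leeYangPoly_zero]
  | succ n ih =>
    intro hroot
    have hq' : ‖(q : ℂ)‖ ≤ 1 := by simpa using hq
    have hroots : ∀ a ∈ (leeYangPoly (q : ℂ) n).roots, ‖z‖ ≤ ‖a‖ := fun a ha ↦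
      hz.le.trans (not_lt.1 fun h ↦ ih h (isRoot_of_mem_roots ha))
    have hle : ‖((leeYangPoly (q : ℂ) n).scaleRoots q).eval z‖ ≤
        ‖(leeYangPoly (q : ℂ) n).eval (q * z)‖ := by
      simpa using norm_eval_scaleRoots_conj_le (IsAlgClosed.splits _) hq' hroots
    have heq : ‖(leeYangPoly (q : ℂ) n).eval (q * z)‖ =
        ‖z‖ * ‖((leeYangPoly (q : ℂ) n).scaleRoots q).eval z‖ := by
      simp only [leeYangPoly_succ, eval_add, eval_comp, eval_mul, eval_C, eval_X] at hroot
      rw [eq_neg_of_add_eq_zero_left hroot, norm_neg, norm_mul]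
    have hqz : ‖q * z‖ < 1 := by
      rw [norm_mul]
      exact mul_lt_one_of_nonneg_of_lt_one_right hq' (norm_nonneg z) hz
    have hpos : 0 < ‖(leeYangPoly (q : ℂ) n).eval (q * z)‖ := norm_pos_iff.2 (ih hqz)
    nlinarith [norm_nonneg z]

theorem norm_eq_one_of_eval_leeYangPoly_eq_zero (hq : |q| ≤ 1)
    (hz : (leeYangPoly (q : ℂ) n).eval z = 0) : ‖z‖ = 1 := by
  have one_le : 1 ≤ ‖z‖ := not_lt.1 fun h ↦ eval_leeYangPoly_ne_zero_of_norm_lt_one hq h hz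
  have hz₀ : z ≠ 0 := norm_pos_iff.1 (one_pos.trans_le one_le)
  have hz_inv : (leeYangPoly (q : ℂ) n).eval z⁻¹ = 0 := by
    have := invertibleOfNonzero hz₀
    rw [← reverse_leeYangPoly, ← invOf_eq_inv]
    exact (eval₂_reverse_eq_zero_iff (RingHom.id ℂ) z _).2 hz
  refine one_le.antisymm' (not_lt.1 fun h ↦ eval_leeYangPoly_ne_zero_of_norm_lt_one hq ?_ hz_inv)
  rw [norm_inv]
  exact inv_lt_one_of_one_lt₀ h

theorem eval_derivative_leeYangPoly_ne_zero (hq : |q| < 1)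
    (hz : (leeYangPoly (q : ℂ) n).eval z = 0) :
    (derivative (leeYangPoly (q : ℂ) n)).eval z ≠ 0 := by
  intro hderiv
  cases n with
  | zero => simp [leeYangPoly_zero] at hz
  | succ n =>
    have hz_norm : ‖z‖ = 1 := norm_eq_one_of_eval_leeYangPoly_eq_zero hq.le hz
    have hscale : ((leeYangPoly (q : ℂ) n).scaleRoots q).eval z = 0 := by
      simpa [derivative_leeYangPoly_succ, Nat.cast_add_one_ne_zero] using hderiv
    have hqz : (leeYangPoly (q : ℂ) n).eval (q * z) = 0 := by
      simpa [leeYangPoly_succ, hscale] using hz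
    have hqz_norm : ‖q * z‖ = 1 := norm_eq_one_of_eval_leeYangPoly_eq_zero hq.le hqz
    rw [norm_mul, hz_norm, mul_one, Complex.norm_real, Real.norm_eq_abs] at hqz_norm
    exact hq.ne hqz_norm

end Zeros

section CurieWeiss

theorem sum_spin_eq {ι : Type*} [Fintype ι] (σ : ι → Bool) :
    ∑ j, spin (σ j) = 2 * (Finset.univ.filter fun j ↦ σ j).card - Fintype.card ι := by
  have hspin (b : Bool) : spin b = 2 * (if b then 1 else 0) - 1 := by
    cases b <;> norm_num [spin]
  simp only [hspin, Finset.sum_sub_distrib, ← Finset.mul_sum, Finset.sum_boole]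
  simp

theorem sum_apply_sum_spin {ι M : Type*} [Fintype ι] [DecidableEq ι] [AddCommMonoid M]
    (f : ℝ → M) :
    ∑ σ : ι → Bool, f (∑ j, spin (σ j)) =
      ∑ k ∈ Finset.range (Fintype.card ι + 1),
        (Fintype.card ι).choose k • f (2 * k - Fintype.card ι) := by
  rw [← Finset.card_univ,
    ← Finset.sum_powerset_apply_card fun k : ℕ ↦ f (2 * k - (Finset.univ : Finset ι).card),
    Finset.powerset_univ]
  exact Finset.sum_bij' (fun σ _ ↦ Finset.univ.filter fun j ↦ σ j) (fun s _ j ↦ decide (j ∈ s))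
    (by simp) (by simp) (by simp) (by simp) (by simp [sum_spin_eq])

theorem CWZ_eq_exp_mul_eval_leeYangPoly (n : ℕ) (t x : ℂ) :
    CWZ n t x = Complex.exp (t * n ^ 2 - Complex.I * x * n) *
      (leeYangPoly (Complex.exp (-4 * t)) n).eval (Complex.exp (2 * Complex.I * x)) := by
  rw [CWZ, sum_apply_sum_spin fun s : ℝ ↦ Complex.exp (t * (s : ℂ) ^ 2 + Complex.I * x * s),
    Fintype.card_fin, eval_leeYangPoly, Finset.mul_sum]
  refine Finset.sum_congr rfl fun k hk ↦ ?_
  obtain ⟨m, rfl⟩ := Nat.exists_eq_add_of_le (Finset.mem_range_succ_iff.1 hk)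
  rw [nsmul_eq_mul, Nat.add_sub_cancel_left, ← Complex.exp_nat_mul, ← Complex.exp_nat_mul,
    mul_assoc (Nat.cast _), mul_left_comm (Complex.exp _), ← Complex.exp_add, ← Complex.exp_add]
  congr 2
  push_cast
  ring

theorem deriv_mul_comp_ne_zero {𝕜 : Type*} [NontriviallyNormedField 𝕜] {u f g : 𝕜 → 𝕜} {x : 𝕜}
    (hu : DifferentiableAt 𝕜 u x) (hux : u x ≠ 0) (hfx : f (g x) = 0)
    (hf : deriv f (g x) ≠ 0) (hg : deriv g x ≠ 0) :
    deriv (fun y ↦ u y * f (g y)) x ≠ 0 := by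
  have hfg := (differentiableAt_of_deriv_ne_zero hf).hasDerivAt.comp x
    (differentiableAt_of_deriv_ne_zero hg).hasDerivAt
  have hderiv : deriv (fun y ↦ u y * f (g y)) x = u x * (deriv f (g x) * deriv g x) := by
    refine (hu.hasDerivAt.mul hfg).deriv.trans ?_
    rw [Function.comp_apply, hfx, mul_zero, zero_add]
  rw [hderiv]
  exact mul_ne_zero hux (mul_ne_zero hf hg)

theorem stmt15_general (n : ℕ) {t : ℂ} {q : ℝ} (htq : Complex.exp (-4 * t) = q) (hq : |q| < 1)
    {x : ℂ} (hx : CWZ n t x = 0) :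
    deriv (CWZ n t) x ≠ 0 := by
  have hroot : (leeYangPoly (q : ℂ) n).eval (Complex.exp (2 * Complex.I * x)) = 0 := by
    simpa [CWZ_eq_exp_mul_eval_leeYangPoly, ← htq] using hx
  have hexp : deriv (fun y ↦ Complex.exp (2 * Complex.I * y)) x ≠ 0 := by
    rw [(hasDerivAt_const_mul (2 * Complex.I)).cexp.deriv]
    simp
  rw [funext (CWZ_eq_exp_mul_eval_leeYangPoly n t), htq]
  refine deriv_mul_comp_ne_zero (f := fun z ↦ (leeYangPoly (q : ℂ) n).eval z)
    (by fun_prop) (Complex.exp_ne_zero _) hroot ?_ hexp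
  rw [Polynomial.deriv]
  exact eval_derivative_leeYangPoly_ne_zero hq hroot

end CurieWeiss

theorem stmt15 (n : ℕ) (hn : 0 < n) (t : ℝ) (ht : 0 < t)
    (x : ℂ) (hx : CWZ n t x = 0) :
    deriv (CWZ n t) x ≠ 0 := by
  refine stmt15_general n (q := Real.exp (-4 * t)) (by simp) ?_ hx
  rw [abs_of_pos (Real.exp_pos _), Real.exp_lt_one_iff]
  linarith
end

section
/- Let n be a positive even integer. Let x_1, …, x_{n/2} : [0,∞) → ℝ be continuous functions with x_k(0) = π/2 for each k, such that for every t > 0 one has 0 < x_1(t) < … < x_{n/2}(t) < π/2 and {x ∈ (0,π/2] : Z_{n,t}(x) = 0} = {x_1(t), …, x_{n/2}(t)}. Then for each k ∈ {1, …, n/2}, x_k(t_1) > x_k(t_2) whenever 0 ≤ t_1 < t_2. -/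
open scoped Real

/-!
For even `n`, the real part of `Z_{n,t}(x)` is a polynomial `P_t` of degree at most `n / 2` in
`y = cos (2 * x)`, and the heat equation `∂_t Z = -∂_x² Z` becomes
`∂_t P = 4 * (y * P' - (1 - y ^ 2) * P'')`. Hence the zeros `y_k` of `P_t`, all of which are real,
simple and in `(-1, 1)` for `t > 0`, repel each other:
`y_k' = -4 * y_k + 8 * (1 - y_k ^ 2) * ∑_{j ≠ k} (y_k - y_j)⁻¹`.
Such a flow preserves order: if one solution lies above another, then a particle of the upper
solution that touches its lower counterpart is pushed up more strongly, because the particles to its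
right are farther away and those to its left are closer. Since all zeros start at `-1` and are above
`-1` at time `s`, comparing the flow with its shift by `s` gives `y_k(t) < y_k(t + s)`. The flow and
its shift never coincide entirely: that would make `P_{t+s}` a multiple of `P_t`, but the
coefficient of degree `n / 2` grows by a larger factor than the value at `y = 1`.
-/

open Polynomial Set Filter Topology

section FirstContact

variable {ι : Type*} [Finite ι] {f : ι → ℝ → ℝ}
  (hcont : ∀ k, ContinuousOn (f k) (Ici 0)) (hinit : ∀ k, 0 < f k 0)
  (htouch : ∀ t, 0 < t → (∀ j, 0 ≤ f j t) → ∀ k, f k t = 0 → ∃ d, 0 < d ∧ HasDerivAt (f k) d t)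
include hcont hinit htouch

theorem nonneg_of_hasDerivAt_pos_of_eq_zero {t : ℝ} (ht : 0 ≤ t) (k : ι) : 0 ≤ f k t := by
  suffices h : Icc 0 t ⊆ {τ | ∀ j, 0 ≤ f j τ} from h ⟨ht, le_rfl⟩ k
  refine IsClosed.Icc_subset_of_forall_mem_nhdsWithin ?_ (fun j => (hinit j).le) ?_
  · have hclosed (j : ι) : IsClosed (Icc 0 t ∩ f j ⁻¹' Ici 0) :=
      ((hcont j).mono Icc_subset_Ici_self).preimage_isClosed_of_isClosed isClosed_Icc isClosed_Ici
    convert (isClosed_iInter hclosed).inter (isClosed_Icc (a := (0 : ℝ)) (b := t)) using 1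
    ext τ
    simp +contextual
  · rintro τ ⟨hnonneg, hτ, -⟩
    refine eventually_all.2 fun j => ?_
    rcases (hnonneg j).eq_or_lt with hzero | hpos
    · have hτ' : 0 < τ := hτ.lt_of_ne fun h => (hinit j).ne (h ▸ hzero)
      obtain ⟨d, hd, hderiv⟩ := htouch τ hτ' hnonneg j hzero.symm
      have hslope := (hasDerivAt_iff_tendsto_slope.1 hderiv).mono_left
        (nhdsWithin_mono τ fun _ h => (mem_Ioi.1 h).ne')
      filter_upwards [hslope.eventually (lt_mem_nhds hd), self_mem_nhdsWithin] with r hr hτr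
      rw [slope_def_field, ← hzero, sub_zero] at hr
      exact ((div_pos_iff_of_pos_right (sub_pos.2 hτr)).1 hr).le
    · have hright : ContinuousWithinAt (f j) (Ioi τ) τ :=
        (hcont j τ hτ).mono ((Ioi_subset_Ioi hτ).trans Ioi_subset_Ici_self)
      exact (hright.eventually (lt_mem_nhds hpos)).mono fun _ => le_of_lt

theorem pos_of_hasDerivAt_pos_of_eq_zero {t : ℝ} (ht : 0 ≤ t) (k : ι) : 0 < f k t := by
  have hnonneg {τ : ℝ} (hτ : 0 ≤ τ) (j : ι) : 0 ≤ f j τ :=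
    nonneg_of_hasDerivAt_pos_of_eq_zero hcont hinit htouch hτ j
  refine (hnonneg ht k).lt_of_ne fun hzero => ?_
  have ht' : 0 < t := ht.lt_of_ne fun h => (hinit k).ne (h ▸ hzero)
  obtain ⟨d, hd, hderiv⟩ := htouch t ht' (hnonneg ht) k hzero.symm
  have hmin : IsLocalMin (f k) t := by
    filter_upwards [Ici_mem_nhds ht'] with τ hτ
    exact hzero ▸ hnonneg hτ k
  exact hd.ne' (hmin.hasDerivAt_eq_zero hderiv)

end FirstContact

theorem hasDerivAt_of_eventually_apply_eq {𝕜 : Type*} [NontriviallyNormedField 𝕜]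
    [CompleteSpace 𝕜] {F : 𝕜 × 𝕜 → 𝕜} {F' : 𝕜 × 𝕜 →L[𝕜] 𝕜} {w : 𝕜 → 𝕜} {t d : 𝕜}
    (hF : HasStrictFDerivAt F F' (t, w t)) (hne : F' (0, 1) ≠ 0) (hw : ContinuousAt w t)
    (hconst : ∀ᶠ τ in 𝓝 t, F (τ, w τ) = F (t, w t)) (htangent : F' (1, d) = 0) :
    HasDerivAt w d t := by
  have hinv : (F' ∘L .inr 𝕜 𝕜 𝕜).IsInvertible :=
    ⟨ContinuousLinearEquiv.unitsEquivAut 𝕜 (Units.mk0 _ hne), by ext; simp⟩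
  have himplicit : hF.implicitFunctionOfProdDomain hinv =ᶠ[𝓝 t] w := by
    have hgraph : Tendsto (fun τ => (τ, w τ)) (𝓝 t) (𝓝 (t, w t)) := continuousAt_id.prodMk hw
    filter_upwards [hconst, hgraph.eventually
      (hF.eventually_apply_eq_iff_implicitFunctionOfProdDomain hinv)] with τ hτ hiff
    exact hiff.1 hτ
  obtain ⟨d', hd'⟩ : ∃ d', HasDerivAt w d' t :=
    ⟨_, ((hF.hasStrictFDerivAt_implicitFunctionOfProdDomain hinv).hasFDerivAt.congr_of_eventuallyEq
      himplicit.symm).hasDerivAt⟩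
  have hchain : F' (1, d') = 0 :=
    (hF.hasFDerivAt.comp_hasDerivAt t ((hasDerivAt_id t).prodMk hd')).unique
      ((hasDerivAt_const t _).congr_of_eventuallyEq hconst)
  have hdiff : (d' - d) * F' (0, 1) = F' (1, d') - F' (1, d) := by
    rw [← smul_eq_mul, ← map_smul, ← map_sub]
    simp
  rw [hchain, htangent, sub_self, mul_eq_zero_iff_right hne, sub_eq_zero] at hdiff
  exact hdiff ▸ hd'

section CoulombForce

/-- The force exerted on the `k`-th of finitely many particles at the positions `v` on the line,
when each pair repels with the inverse of its distance (one-dimensional log-gas). -/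
def coulombForce {K ι : Type*} [Field K] [Fintype ι] [DecidableEq ι] (v : ι → K) (k : ι) : K :=
  ∑ j ∈ Finset.univ.erase k, (v k - v j)⁻¹

variable {ι : Type*} [Fintype ι]

theorem coulombForce_lt_coulombForce {K : Type*} [Field K] [LinearOrder K] [IsStrictOrderedRing K]
    [LinearOrder ι] {v w : ι → K} (hv : StrictAnti v) (hw : StrictAnti w) (hlt : v < w) {k : ι}
    (hk : v k = w k) : coulombForce v k < coulombForce w k := by
  have hterm {j : ι} (hjk : j ≠ k) (hj : v j < w j) : (v k - v j)⁻¹ < (w k - w j)⁻¹ := by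
    have hdist : w k - w j < v k - v j := by rw [hk]; exact sub_lt_sub_left hj _
    rcases hjk.lt_or_gt with h | h
    · exact (inv_lt_inv_of_neg (sub_neg.2 (hv h)) (sub_neg.2 (hw h))).2 hdist
    · exact inv_strictAnti₀ (sub_pos.2 (hw h)) hdist
  obtain ⟨hle, i, hi⟩ := Pi.lt_def.1 hlt
  refine Finset.sum_lt_sum (fun j hj => ?_) ⟨i, ?_, ?_⟩
  · rcases (hle j).eq_or_lt with h | h
    · rw [hk, h]
    · exact (hterm (Finset.ne_of_mem_erase hj) h).le
  · exact Finset.mem_erase.2 ⟨fun h => hi.ne (h ▸ hk), Finset.mem_univ i⟩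
  · exact hterm (fun h => hi.ne (h ▸ hk)) hi

/-- Strictly ordered particles on the line that move for positive times according to
`w_k' = g(w_k) + h(w_k) * ∑_{j ≠ k} (w_k - w_j)⁻¹` with positive mobility `h`. At time `0` only
continuity is required, so that particles may start at the same position. -/
structure IsCoulombFlow [LinearOrder ι] (g h : ℝ → ℝ) (w : ι → ℝ → ℝ) : Prop where
  continuousOn : ∀ k, ContinuousOn (w k) (Ici 0)
  strictAnti : ∀ t, 0 < t → StrictAnti fun k => w k t
  mobility_pos : ∀ t, 0 < t → ∀ k, 0 < h (w k t)
  hasDerivAt : ∀ t, 0 < t → ∀ k,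
    HasDerivAt (w k) (g (w k t) + h (w k t) * coulombForce (fun j => w j t) k) t

namespace IsCoulombFlow

variable [LinearOrder ι] {g h : ℝ → ℝ} {v w : ι → ℝ → ℝ}

theorem comp_add_const (hw : IsCoulombFlow g h w) {s : ℝ} (hs : 0 ≤ s) :
    IsCoulombFlow g h fun k t => w k (t + s) where
  continuousOn k := (hw.continuousOn k).comp (by fun_prop) fun _ ht => add_nonneg (mem_Ici.1 ht) hs
  strictAnti t ht := hw.strictAnti (t + s) (by positivity)
  mobility_pos t ht := hw.mobility_pos (t + s) (by positivity)
  hasDerivAt t ht k := (hw.hasDerivAt (t + s) (by positivity) k).comp_add_const t s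

theorem lt_of_initial_lt (hv : IsCoulombFlow g h v) (hw : IsCoulombFlow g h w)
    (hne : ∀ t, 0 < t → (fun k => v k t) ≠ fun k => w k t) (hinit : ∀ k, v k 0 < w k 0)
    {t : ℝ} (ht : 0 ≤ t) (k : ι) : v k t < w k t := by
  refine sub_pos.1 (pos_of_hasDerivAt_pos_of_eq_zero (f := fun k t => w k t - v k t)
    (fun k => (hw.continuousOn k).sub (hv.continuousOn k)) (fun k => sub_pos.2 (hinit k))
    (fun t ht hnonneg k hzero => ?_) ht k)
  refine ⟨_, sub_pos.2 ?_, (hw.hasDerivAt t ht k).sub (hv.hasDerivAt t ht k)⟩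
  have htouch : v k t = w k t := (sub_eq_zero.1 hzero).symm
  have hlt : (fun j => v j t) < fun j => w j t :=
    lt_of_le_of_ne (fun j => sub_nonneg.1 (hnonneg j)) (hne t ht)
  have hforce := coulombForce_lt_coulombForce (hv.strictAnti t ht) (hw.strictAnti t ht) hlt htouch
  rw [htouch]
  gcongr
  exact hw.mobility_pos t ht k

theorem strictMonoOn (hw : IsCoulombFlow g h w) (hinit : ∀ s, 0 < s → ∀ k, w k 0 < w k s)
    (hne : ∀ s, 0 < s → ∀ t, 0 < t → (fun k => w k t) ≠ fun k => w k (t + s)) (k : ι) :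
    StrictMonoOn (w k) (Ici 0) := by
  intro t₁ ht₁ t₂ _ hlt
  have hs : 0 < t₂ - t₁ := sub_pos.2 hlt
  have hshift := hw.lt_of_initial_lt (hw.comp_add_const hs.le) (hne _ hs)
    (by simpa only [zero_add] using hinit _ hs) ht₁ k
  rwa [add_sub_cancel] at hshift

end IsCoulombFlow

end CoulombForce

section SimpleRoots

variable {K ι : Type*} [Field K] [Fintype ι] {p : K[X]} {v : ι → K}

theorem eq_C_coeff_mul_nodal (hdeg : p.natDegree ≤ Fintype.card ι) (hv : Function.Injective v)
    (hroot : ∀ i, p.eval (v i) = 0) :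
    p = C (p.coeff (Fintype.card ι)) * Lagrange.nodal Finset.univ v := by
  have hnodal : (Lagrange.nodal Finset.univ v).natDegree = Fintype.card ι :=
    Lagrange.natDegree_nodal
  refine eq_of_degree_sub_lt_of_eval_index_eq Finset.univ hv.injOn ?_ fun i hi => ?_
  · refine (degree_lt_iff_coeff_zero _ _).2 fun d hd => ?_
    rcases hd.eq_or_lt with rfl | hd
    · have hmonic : (Lagrange.nodal Finset.univ v).coeff (Fintype.card ι) = 1 :=
        hnodal ▸ Lagrange.nodal_monic.coeff_natDegree
      simp [hmonic]
    · rw [coeff_sub, coeff_C_mul, coeff_eq_zero_of_natDegree_lt (hdeg.trans_lt hd),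
        coeff_eq_zero_of_natDegree_lt (hnodal.trans_lt hd), mul_zero, sub_zero]
  · rw [hroot, eval_mul, Lagrange.eval_nodal_at_node hi, mul_zero]

theorem eval_derivative_ne_zero_of_natDegree_le_card (hp : p ≠ 0)
    (hdeg : p.natDegree ≤ Fintype.card ι) (hv : Function.Injective v)
    (hroot : ∀ i, p.eval (v i) = 0) (k : ι) :
    (derivative p).eval (v k) ≠ 0 := by
  classical
  have hfac := eq_C_coeff_mul_nodal hdeg hv hroot
  have hcoeff : p.coeff (Fintype.card ι) ≠ 0 := fun h => hp (by rw [hfac, h, C_0, zero_mul])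
  rw [hfac, derivative_C_mul, eval_C_mul,
    Lagrange.eval_nodal_derivative_eval_node_eq (Finset.mem_univ k), Lagrange.eval_nodal]
  exact mul_ne_zero hcoeff (Finset.prod_ne_zero_iff.2 fun j hj =>
    sub_ne_zero.2 (hv.ne (Finset.ne_of_mem_erase hj).symm))

theorem eval_derivative_derivative_eq_coulombForce_mul [DecidableEq ι]
    (hdeg : p.natDegree ≤ Fintype.card ι) (hv : Function.Injective v)
    (hroot : ∀ i, p.eval (v i) = 0) (k : ι) :
    (derivative (derivative p)).eval (v k) =
      2 * coulombForce v k * (derivative p).eval (v k) := by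
  set q := Lagrange.nodal (Finset.univ.erase k) v
  have hq : (derivative q).eval (v k) = coulombForce v k * q.eval (v k) := by
    rw [Lagrange.derivative_nodal, eval_finsetSum, coulombForce, Finset.sum_mul]
    refine Finset.sum_congr rfl fun j hj => ?_
    have hjk : v k - v j ≠ 0 := sub_ne_zero.2 (hv.ne (Finset.ne_of_mem_erase hj).symm)
    simp only [q, Lagrange.nodal_eq_mul_nodal_erase hj, eval_mul, eval_sub, eval_X, eval_C,
      inv_mul_cancel_left₀ hjk]
  have hfac : p = C (p.coeff (Fintype.card ι)) * ((X - C (v k)) * q) := by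
    rw [← Lagrange.nodal_eq_mul_nodal_erase (Finset.mem_univ k)]
    exact eq_C_coeff_mul_nodal hdeg hv hroot
  rw [hfac]
  simp only [derivative_mul, derivative_C, zero_mul, derivative_sub, derivative_X, sub_zero,
    one_mul, zero_add, derivative_add, eval_mul, eval_C, eval_add, hq, eval_sub, eval_X, sub_self,
    add_zero]
  ring

end SimpleRoots

section ChebyshevHeat

variable {κ : Type*} [Fintype κ]

/-- The solution at time `t` of the backward heat equation `∂_t u = -∂_x² u` with initial value
`∑ i, cos (2 * m i * x)`, written as a polynomial in `cos (2 * x)`. -/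
noncomputable def chebyshevHeat (m : κ → ℤ) (t : ℝ) : ℝ[X] :=
  ∑ i, C (Real.exp (4 * t * (m i : ℝ) ^ 2)) * Chebyshev.T ℝ (m i)

theorem eval_chebyshevHeat (m : κ → ℤ) (t y : ℝ) :
    (chebyshevHeat m t).eval y =
      ∑ i, Real.exp (4 * t * (m i : ℝ) ^ 2) * (Chebyshev.T ℝ (m i)).eval y := by
  simp only [chebyshevHeat, eval_finsetSum, eval_C_mul]

theorem eval_one_chebyshevHeat (m : κ → ℤ) (t : ℝ) :
    (chebyshevHeat m t).eval 1 = ∑ i, Real.exp (4 * t * (m i : ℝ) ^ 2) := by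
  simp only [eval_chebyshevHeat, Chebyshev.T_eval_one, mul_one]

theorem chebyshevHeat_ne_zero [Nonempty κ] (m : κ → ℤ) (t : ℝ) : chebyshevHeat m t ≠ 0 := by
  intro h
  have hpos : 0 < (chebyshevHeat m t).eval 1 := by
    rw [eval_one_chebyshevHeat]
    exact Finset.sum_pos (fun _ _ => Real.exp_pos _) Finset.univ_nonempty
  rw [h, eval_zero] at hpos
  exact hpos.false

theorem sum_sq_mul_exp_mul_eval_T (m : κ → ℤ) (t y : ℝ) :
    ∑ i, 4 * (m i : ℝ) ^ 2 * Real.exp (4 * t * (m i : ℝ) ^ 2) * (Chebyshev.T ℝ (m i)).eval y =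
      4 * (y * (derivative (chebyshevHeat m t)).eval y -
        (1 - y ^ 2) * (derivative (derivative (chebyshevHeat m t))).eval y) := by
  simp only [chebyshevHeat, derivative_sum, derivative_C_mul, eval_finsetSum, eval_C_mul,
    Finset.mul_sum, ← Finset.sum_sub_distrib]
  refine Finset.sum_congr rfl fun i _ => ?_
  have hode := congrArg (eval y)
    (Chebyshev.one_sub_X_sq_mul_derivative_derivative_T_eq_poly_in_T (R := ℝ) (m i))
  simp only [Function.iterate_succ, Function.iterate_zero, Function.comp_apply, id_eq, eval_mul,
    eval_sub, eval_one, eval_pow, eval_X, eval_intCast] at hode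
  linear_combination (4 * Real.exp (4 * t * (m i : ℝ) ^ 2)) * hode

theorem hasStrictFDerivAt_eval_chebyshevHeat (m : κ → ℤ) (t y : ℝ) :
    HasStrictFDerivAt (fun q : ℝ × ℝ => (chebyshevHeat m q.1).eval q.2)
      ((4 * (y * (derivative (chebyshevHeat m t)).eval y -
          (1 - y ^ 2) * (derivative (derivative (chebyshevHeat m t))).eval y)) •
            ContinuousLinearMap.fst ℝ ℝ ℝ +
        (derivative (chebyshevHeat m t)).eval y • ContinuousLinearMap.snd ℝ ℝ ℝ) (t, y) := by
  rw [← sum_sq_mul_exp_mul_eval_T]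
  simp only [eval_chebyshevHeat]
  have hterm (i : κ) := HasStrictFDerivAt.mul
    (((hasStrictFDerivAt_fst (𝕜 := ℝ) (p := (t, y))).const_mul 4).mul_const ((m i : ℝ) ^ 2)).exp
    (((Chebyshev.T ℝ (m i)).hasStrictDerivAt y).comp_hasStrictFDerivAt (t, y)
      hasStrictFDerivAt_snd)
  refine (HasStrictFDerivAt.fun_sum fun i _ => hterm i).congr_fderiv ?_
  ext
  · simp only [Function.comp_apply, ContinuousLinearMap.comp_apply, ContinuousLinearMap.inl_apply,
      sum_apply, add_apply, smul_apply, ContinuousLinearMap.coe_fst', ContinuousLinearMap.coe_snd',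
      smul_eq_mul, mul_zero, mul_one, zero_add, add_zero]
    refine Finset.sum_congr rfl fun i _ => ?_
    ring
  · simp [chebyshevHeat, eval_finsetSum]

section Degree

variable {m : κ → ℤ} {N : ℕ} (hm : ∀ i, (m i).natAbs ≤ N)
include hm

theorem natDegree_chebyshevHeat_le (t : ℝ) : (chebyshevHeat m t).natDegree ≤ N :=
  natDegree_sum_le_of_forall_le _ _ fun i _ =>
    (natDegree_C_mul_le _ _).trans ((Chebyshev.natDegree_T ℝ (m i)).trans_le (hm i))

theorem coeff_chebyshevHeat_add (t s : ℝ) :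
    (chebyshevHeat m (t + s)).coeff N =
      Real.exp (4 * s * (N : ℝ) ^ 2) * (chebyshevHeat m t).coeff N := by
  simp only [chebyshevHeat, finsetSum_coeff, coeff_C_mul, Finset.mul_sum]
  refine Finset.sum_congr rfl fun i _ => ?_
  rcases (hm i).lt_or_eq with h | rfl
  · rw [coeff_eq_zero_of_natDegree_lt (by rwa [Chebyshev.natDegree_T])]
    simp only [mul_zero]
  · rw [Nat.cast_natAbs, Int.cast_abs, sq_abs, ← mul_assoc, ← Real.exp_add]
    ring_nf

theorem eval_one_chebyshevHeat_add_lt (hlt : ∃ i, (m i).natAbs < N) (t : ℝ) {s : ℝ}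
    (hs : 0 < s) :
    (chebyshevHeat m (t + s)).eval 1 <
      Real.exp (4 * s * (N : ℝ) ^ 2) * (chebyshevHeat m t).eval 1 := by
  have hsq (i : κ) : (m i : ℝ) ^ 2 = ((m i).natAbs : ℝ) ^ 2 := by
    rw [Nat.cast_natAbs, Int.cast_abs, sq_abs]
  simp only [eval_one_chebyshevHeat, Finset.mul_sum, ← Real.exp_add, mul_add, add_mul, hsq]
  obtain ⟨i, hi⟩ := hlt
  refine Finset.sum_lt_sum (fun j _ => ?_) ⟨i, Finset.mem_univ i, ?_⟩
  · rw [add_comm]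
    gcongr
    exact hm j
  · rw [add_comm]
    gcongr

end Degree

section Roots

variable {ι : Type*} [Fintype ι] {m : κ → ℤ} (hm : ∀ i, (m i).natAbs ≤ Fintype.card ι)
include hm

theorem roots_chebyshevHeat_ne (hlt : ∃ i, (m i).natAbs < Fintype.card ι) {v w : ι → ℝ}
    (hv : Function.Injective v) {t s : ℝ} (hs : 0 < s)
    (hroot_v : ∀ k, (chebyshevHeat m t).eval (v k) = 0)
    (hroot_w : ∀ k, (chebyshevHeat m (t + s)).eval (w k) = 0) : v ≠ w := by
  rintro rfl
  have hfac_t := eq_C_coeff_mul_nodal (natDegree_chebyshevHeat_le hm t) hv hroot_v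
  have hfac_ts := eq_C_coeff_mul_nodal (natDegree_chebyshevHeat_le hm (t + s)) hv hroot_w
  have hgrowth := eval_one_chebyshevHeat_add_lt hm hlt t hs
  rw [hfac_t, hfac_ts, coeff_chebyshevHeat_add hm, eval_C_mul, eval_C_mul, mul_assoc] at hgrowth
  exact hgrowth.false

theorem hasDerivAt_root_chebyshevHeat [Nonempty κ] [DecidableEq ι] {w : ι → ℝ → ℝ} {t : ℝ}
    (hinj : Function.Injective fun k => w k t)
    (hroot : ∀ᶠ τ in 𝓝 t, ∀ k, (chebyshevHeat m τ).eval (w k τ) = 0) {k : ι}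
    (hcont : ContinuousAt (w k) t) :
    HasDerivAt (w k)
      (-4 * w k t + 8 * (1 - w k t ^ 2) * coulombForce (fun j => w j t) k) t := by
  have hdeg := natDegree_chebyshevHeat_le hm t
  have hsimple := eval_derivative_ne_zero_of_natDegree_le_card (chebyshevHeat_ne_zero m t) hdeg
    hinj hroot.self_of_nhds k
  have hforce :=
    eval_derivative_derivative_eq_coulombForce_mul hdeg hinj hroot.self_of_nhds k
  refine hasDerivAt_of_eventually_apply_eq
    (hasStrictFDerivAt_eval_chebyshevHeat m t (w k t)) (by simpa using hsimple) hcont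
    (hroot.mono fun τ hτ => (hτ k).trans (hroot.self_of_nhds k).symm) ?_
  simp only [add_apply, smul_apply, ContinuousLinearMap.coe_fst', ContinuousLinearMap.coe_snd',
    smul_eq_mul, mul_one, hforce]
  ring

theorem isCoulombFlow_root_chebyshevHeat [Nonempty κ] [LinearOrder ι] {w : ι → ℝ → ℝ}
    (hcont : ∀ k, ContinuousOn (w k) (Ici 0)) (hanti : ∀ t, 0 < t → StrictAnti fun k => w k t)
    (hmem : ∀ t, 0 < t → ∀ k, w k t ∈ Ioo (-1) 1)
    (hroot : ∀ t, 0 < t → ∀ k, (chebyshevHeat m t).eval (w k t) = 0) :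
    IsCoulombFlow (fun y => -4 * y) (fun y => 8 * (1 - y ^ 2)) w where
  continuousOn := hcont
  strictAnti := hanti
  mobility_pos t ht k := by nlinarith [(hmem t ht k).1, (hmem t ht k).2]
  hasDerivAt t ht k :=
    hasDerivAt_root_chebyshevHeat hm (hanti t ht).injective
      (eventually_of_mem (Ioi_mem_nhds ht) hroot) ((hcont k).continuousAt (Ici_mem_nhds ht))

theorem strictMonoOn_root_chebyshevHeat [LinearOrder ι] {w : ι → ℝ → ℝ}
    (hlt : ∃ i, (m i).natAbs < Fintype.card ι) (hinit : ∀ s, 0 < s → ∀ k, w k 0 < w k s)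
    (hcont : ∀ k, ContinuousOn (w k) (Ici 0)) (hanti : ∀ t, 0 < t → StrictAnti fun k => w k t)
    (hmem : ∀ t, 0 < t → ∀ k, w k t ∈ Ioo (-1) 1)
    (hroot : ∀ t, 0 < t → ∀ k, (chebyshevHeat m t).eval (w k t) = 0) (k : ι) :
    StrictMonoOn (w k) (Ici 0) :=
  have : Nonempty κ := ⟨hlt.choose⟩
  (isCoulombFlow_root_chebyshevHeat hm hcont hanti hmem hroot).strictMonoOn hinit
    (fun s hs t ht => roots_chebyshevHeat_ne hm hlt (hanti t ht).injective hs (hroot t ht)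
      (hroot (t + s) (by positivity))) k

end Roots

end ChebyshevHeat

section CurieWeiss

/-- Half of the total spin of `σ` for even `n`, which is the frequency of the term of `σ` in
`cos (2 * x)`; the division `n / 2` truncates when `n` is odd. -/
def halfSpin {n : ℕ} (σ : Fin n → Bool) : ℤ :=
  (Finset.univ.filter fun j => σ j = true).card - (n / 2 : ℕ)

variable {n : ℕ}

theorem sum_spin_eq_two_mul_halfSpin (hn : Even n) (σ : Fin n → Bool) :
    ∑ j, spin (σ j) = 2 * (halfSpin σ : ℝ) := by
  have hspin (b : Bool) : spin b = 2 * (if b = true then 1 else 0) - 1 := by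
    cases b <;> norm_num [spin]
  have hhalf : 2 * ((n / 2 : ℕ) : ℝ) = n := mod_cast Nat.two_mul_div_two_of_even hn
  simp only [hspin, Finset.sum_sub_distrib, ← Finset.mul_sum, Finset.sum_boole, halfSpin,
    Finset.sum_const, Finset.card_univ, Fintype.card_fin, nsmul_eq_mul, mul_one, Int.cast_sub,
    Int.cast_natCast]
  linear_combination hhalf

theorem natAbs_halfSpin_le (hn : Even n) (σ : Fin n → Bool) : (halfSpin σ).natAbs ≤ n / 2 := by
  have hcard := (Finset.univ.filter fun j => σ j = true).card_le_univ
  rw [Fintype.card_fin] at hcard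
  have := Nat.two_mul_div_two_of_even hn
  unfold halfSpin
  omega

theorem exists_natAbs_halfSpin_lt (hpos : 0 < n) (hn : Even n) :
    ∃ σ : Fin n → Bool, (halfSpin σ).natAbs < n / 2 := by
  refine ⟨fun j => decide (j = ⟨0, hpos⟩), ?_⟩
  have := Nat.two_mul_div_two_of_even hn
  simp only [halfSpin, decide_eq_true_eq, Finset.filter_eq', Finset.mem_univ, if_true,
    Finset.card_singleton]
  omega

theorem re_CWZ (hn : Even n) (t x : ℝ) :
    (CWZ n t x).re = (chebyshevHeat (halfSpin (n := n)) t).eval (Real.cos (2 * x)) := by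
  rw [eval_chebyshevHeat, CWZ, Complex.re_sum]
  refine Finset.sum_congr rfl fun σ _ => ?_
  have hexponent : (t * ((2 * halfSpin σ : ℝ) : ℂ) ^ 2 + Complex.I * x * (2 * halfSpin σ : ℝ)) =
      (4 * t * (halfSpin σ : ℝ) ^ 2 : ℝ) + (halfSpin σ * (2 * x) : ℝ) * Complex.I := by
    push_cast
    ring
  rw [sum_spin_eq_two_mul_halfSpin hn, hexponent, Chebyshev.T_real_cos, Complex.exp_re,
    Complex.add_re, Complex.add_im, Complex.re_ofReal_mul, Complex.im_ofReal_mul,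
    Complex.ofReal_re, Complex.ofReal_im, Complex.I_re, Complex.I_im, mul_zero, mul_one, add_zero,
    zero_add]

theorem strictAntiOn_cos_two_mul :
    StrictAntiOn (fun x : ℝ => Real.cos (2 * x)) (Icc 0 (π / 2)) := fun x hx y hy hxy =>
  Real.strictAntiOn_cos ⟨by linarith [hx.1], by linarith [hx.2]⟩
    ⟨by linarith [hy.1], by linarith [hy.2]⟩ (by linarith)

theorem cos_two_mul_mem_Ioo {x : ℝ} (hx : x ∈ Ioo 0 (π / 2)) :
    Real.cos (2 * x) ∈ Ioo (-1) 1 := by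
  have hpi : 0 ≤ π / 2 := Real.pi_div_two_pos.le
  have hleft := strictAntiOn_cos_two_mul ⟨le_rfl, hpi⟩ (Ioo_subset_Icc_self hx) hx.1
  have hright := strictAntiOn_cos_two_mul (Ioo_subset_Icc_self hx) ⟨hpi, le_rfl⟩ hx.2
  simp only [mul_zero, Real.cos_zero] at hleft
  simp only [mul_div_cancel₀ π two_ne_zero, Real.cos_pi] at hright
  exact ⟨hright, hleft⟩

theorem strictAntiOn_zeros_CWZ {ι : Type*} [Fintype ι] [LinearOrder ι] (hpos : 0 < n)
    (hn : Even n) (hcard : Fintype.card ι = n / 2) {x : ι → ℝ → ℝ}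
    (hcont : ∀ k, ContinuousOn (x k) (Ici 0)) (hinit : ∀ k, x k 0 = π / 2)
    (hmem : ∀ t, 0 < t → ∀ k, x k t ∈ Ioo 0 (π / 2))
    (hmono : ∀ t, 0 < t → StrictMono fun k => x k t)
    (hzero : ∀ t : ℝ, 0 < t → ∀ k, CWZ n t (x k t) = 0) (k : ι) :
    StrictAntiOn (x k) (Ici 0) := by
  have hrange : MapsTo (x k) (Ici 0) (Icc 0 (π / 2)) := fun t ht => by
    rcases (mem_Ici.1 ht).eq_or_lt with rfl | ht
    · exact ⟨by rw [hinit]; positivity, (hinit k).le⟩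
    · exact Ioo_subset_Icc_self (hmem t ht k)
  have hcos : StrictMonoOn (fun t => Real.cos (2 * x k t)) (Ici 0) := by
    refine strictMonoOn_root_chebyshevHeat (w := fun k t => Real.cos (2 * x k t))
      (hcard ▸ natAbs_halfSpin_le hn) (hcard ▸ exists_natAbs_halfSpin_lt hpos hn)
      (fun s hs j => ?_) (fun j => Real.continuous_cos.comp_continuousOn ((hcont j).const_mul 2))
      (fun t ht i j hij => ?_) (fun t ht j => cos_two_mul_mem_Ioo (hmem t ht j))
      (fun t ht j => ?_) k
    · rw [hinit, mul_div_cancel₀ π two_ne_zero, Real.cos_pi]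
      exact (cos_two_mul_mem_Ioo (hmem s hs j)).1
    · exact strictAntiOn_cos_two_mul (Ioo_subset_Icc_self (hmem t ht i))
        (Ioo_subset_Icc_self (hmem t ht j)) (hmono t ht hij)
    · rw [← re_CWZ hn, hzero t ht, Complex.zero_re]
  exact fun t₁ ht₁ t₂ ht₂ hlt =>
    (strictAntiOn_cos_two_mul.lt_iff_gt (hrange ht₁) (hrange ht₂)).1 (hcos ht₁ ht₂ hlt)

end CurieWeiss

theorem stmt19 (n : ℕ) (hn : 0 < n) (heven : Even n)
    (x : ℕ → ℝ → ℝ)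
    (hcont : ∀ k ∈ Finset.Icc 1 (n / 2), ContinuousOn (x k) (Set.Ici 0))
    (hinit : ∀ k ∈ Finset.Icc 1 (n / 2), x k 0 = π / 2)
    (hzeros : ∀ t : ℝ, 0 < t →
      (∀ k ∈ Finset.Icc 1 (n / 2), 0 < x k t ∧ x k t < π / 2) ∧
      (∀ k, 1 ≤ k → k < n / 2 → x k t < x (k + 1) t) ∧
      {z : ℝ | z ∈ Set.Ioc 0 (π / 2) ∧ CWZ n t z = 0}
        = (fun k => x k t) '' Set.Icc 1 (n / 2)) :
    ∀ k ∈ Finset.Icc 1 (n / 2), ∀ t₁ t₂ : ℝ, 0 ≤ t₁ → t₁ < t₂ →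
      x k t₁ > x k t₂ := by
  intro k hk t₁ t₂ ht₁ hlt
  have hmono (t : ℝ) (ht : 0 < t) : StrictMonoOn (fun k => x k t) (Icc 1 (n / 2)) :=
    strictMonoOn_of_lt_add_one ordConnected_Icc fun j _ hj hj' =>
      (hzeros t ht).2.1 j hj.1 (Nat.lt_of_succ_le hj'.2)
  have hzero (t : ℝ) (ht : 0 < t) (j : ℕ) (hj : j ∈ Finset.Icc 1 (n / 2)) :
      CWZ n t (x j t) = 0 :=
    ((hzeros t ht).2.2.ge (mem_image_of_mem _ (Finset.mem_Icc.1 hj))).2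
  exact strictAntiOn_zeros_CWZ (ι := Finset.Icc 1 (n / 2)) (x := fun j => x j) hn heven (by simp)
    (fun j => hcont j j.2) (fun j => hinit j j.2) (fun t ht j => (hzeros t ht).1 j j.2)
    (fun t ht i j hij => hmono t ht (Finset.mem_Icc.1 i.2) (Finset.mem_Icc.1 j.2) hij)
    (fun t ht j => hzero t ht j j.2) ⟨k, hk⟩ ht₁ (ht₁.trans hlt.le) hlt
end
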